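/- Let V ⊆ ℂ^n be an irreducible variety of dimension d. Then there exist polynomials f_1,…,f_{n−d} ∈ ℂ[x_1,…,x_n] such that V is an irreducible component of Z(f_1,…,f_{n−d}) and ∏_{i=1}^{n−d} deg(f_i) ≤ C(n)·deg(V) for some constant C(n) depending only on n. -/

import Mathlib

open MvPolynomial Set

noncomputable section

namespace Paper

variable (n : ℕ)

/-- The zero locus in `ℂⁿ` of a set of polynomials. -/
def zeroLocus (I : Set (MvPolynomial (Fin n) ℂ)) : Set (Fin n → ℂ) :=
  {x | ∀ f ∈ I, eval x f = 0}

/-- A subset of `ℂⁿ` is algebraic if it is the zero locus of a set of polynomials. -/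
def IsAlgebraicSet (V : Set (Fin n → ℂ)) : Prop :=
  ∃ I : Set (MvPolynomial (Fin n) ℂ), V = zeroLocus n I

/-- An irreducible (affine) variety in `ℂⁿ`: a nonempty algebraic set that is not covered
by two algebraic sets unless it is contained in one of them. -/
def IsIrredVariety (V : Set (Fin n → ℂ)) : Prop :=
  IsAlgebraicSet n V ∧ V.Nonempty ∧
    ∀ V₁ V₂ : Set (Fin n → ℂ), IsAlgebraicSet n V₁ → IsAlgebraicSet n V₂ →
      V ⊆ V₁ ∪ V₂ → V ⊆ V₁ ∨ V ⊆ V₂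

/-- There is a strictly increasing chain of `d + 1` irreducible varieties inside `V`. -/
def HasChain (V : Set (Fin n → ℂ)) (d : ℕ) : Prop :=
  ∃ W : Fin (d + 1) → Set (Fin n → ℂ),
    (∀ i, IsIrredVariety n (W i)) ∧ (∀ i j : Fin (d + 1), i < j → W i ⊂ W j) ∧
      W (Fin.last d) ⊆ V

/-- The (Krull) dimension of a subset of `ℂⁿ`, as the length of the longest chain of
irreducible subvarieties. -/
def dim (V : Set (Fin n → ℂ)) : ℕ := sSup {d | HasChain n V d}

/-- `W` is an irreducible component of `X`: an irreducible subvariety that is maximal among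
irreducible subvarieties of `X`. -/
def IsIrredComponent (W X : Set (Fin n → ℂ)) : Prop :=
  IsIrredVariety n W ∧ W ⊆ X ∧
    ∀ W', IsIrredVariety n W' → W ⊆ W' → W' ⊆ X → W' = W

/-- The degree of an irreducible variety `V ⊆ ℂⁿ` of dimension `d` (i.e. the degree of its
projective closure): the largest finite number of points in which an affine-linear subspace of
dimension `n - d` meets `V`. -/
def degree (V : Set (Fin n → ℂ)) : ℕ :=
  sSup { m | ∃ L : AffineSubspace ℂ (Fin n → ℂ),
    Module.finrank ℂ L.direction = n - dim n V ∧ (V ∩ ↑L).Finite ∧ (V ∩ ↑L).ncard = m }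

/-- The degree of an algebraic set: the sum of the degrees of its irreducible components. -/
def degreeSum (X : Set (Fin n → ℂ)) : ℕ :=
  ∑ᶠ W ∈ {W | IsIrredComponent n W X}, degree n W

/-- The maximal dimension of an irreducible component of `X` containing `V` equals `e`. -/
def MaxCompDimEq (X V : Set (Fin n → ℂ)) (e : ℕ) : Prop :=
  (∃ W, IsIrredComponent n W X ∧ V ⊆ W ∧ dim n W = e) ∧
    ∀ W, IsIrredComponent n W X → V ⊆ W → dim n W ≤ e

/-- The partial degrees `δ_i(V)` of an irreducible variety `V`:  the minimal `δ` such that there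
are polynomials of degree at most `δ` cutting out an algebraic set containing `V` whose
irreducible components containing `V` have maximal dimension `n - i`.  By convention
`δ_0(V) = 0`. -/
def partialDeg (V : Set (Fin n → ℂ)) (i : ℕ) : ℕ :=
  if i = 0 then 0
  else sInf { δ | ∃ I : Finset (MvPolynomial (Fin n) ℂ),
    (∀ f ∈ I, f.totalDegree ≤ δ) ∧ V ⊆ zeroLocus n ↑I ∧
      MaxCompDimEq n (zeroLocus n ↑I) V (n - i) }

/-- The partial degrees as extended naturals, with the convention `δ_i(V) = ∞` for
`i > n - dim V`. -/
def partialDegE (V : Set (Fin n → ℂ)) (i : ℕ) : ℕ∞ :=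
  if i ≤ n - dim n V then (partialDeg n V i : ℕ∞) else ⊤

/-- `δ(V)` for an irreducible variety `V`: the minimal `δ` such that `V` is an irreducible
component of the zero set of a finite family of polynomials of degree at most `δ`. -/
def deltaIrr (V : Set (Fin n → ℂ)) : ℕ :=
  sInf { δ | ∃ I : Finset (MvPolynomial (Fin n) ℂ),
    (∀ f ∈ I, f.totalDegree ≤ δ) ∧ IsIrredComponent n V (zeroLocus n ↑I) }

/-- `δ(V)` for a general algebraic set `V`: the minimal `δ` such that every irreducible
component of `V` is an irreducible component of the zero set of a finite family of polynomials
of degree at most `δ`. -/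
def deltaSet (V : Set (Fin n → ℂ)) : ℕ :=
  sInf { δ | ∃ I : Finset (MvPolynomial (Fin n) ℂ),
    (∀ f ∈ I, f.totalDegree ≤ δ) ∧
      ∀ W, IsIrredComponent n W V → IsIrredComponent n W (zeroLocus n ↑I) }

/-- An algebraic set all of whose irreducible components have dimension `d`. -/
def IsAlgSetOfDim (V : Set (Fin n → ℂ)) (d : ℕ) : Prop :=
  IsAlgebraicSet n V ∧ V.Nonempty ∧ ∀ W, IsIrredComponent n W V → dim n W = d

/-- `Δ_i(V) = max (deg V / (δ_{i+1}(V) ⋯ δ_{n-d}(V))) 1`. -/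
def Delta (V : Set (Fin n → ℂ)) (i : ℕ) : ℝ :=
  max ((degree n V : ℝ) / ∏ j ∈ Finset.Icc (i + 1) (n - dim n V), (partialDeg n V j : ℝ)) 1

/-- `i` is admissible with respect to `V` if `δ_{i+1}(V) > 2 i δ_i(V)` (with the convention
`δ_i(V) = ∞` for `i > n - dim V`). -/
def Admissible (V : Set (Fin n → ℂ)) (i : ℕ) : Prop :=
  ((2 * i : ℕ) : ℕ∞) * partialDegE n V i < partialDegE n V (i + 1)

/-- The interval `ℛ_i(V) = [c₁ δ_i(V)^{n-i} Δ_i(V), (c₀/2) δ_{i+1}(V)^{n-i} Δ_i(V)]`,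
where `δ_{n-d+1}(V) = ∞` makes the last interval a half-line. -/
def RSet (c0 c1 : ℝ) (V : Set (Fin n → ℂ)) (i : ℕ) : Set ℝ :=
  if i = n - dim n V then
    Set.Ici (c1 * (partialDeg n V i : ℝ) ^ (n - i) * Delta n V i)
  else
    Set.Icc (c1 * (partialDeg n V i : ℝ) ^ (n - i) * Delta n V i)
      ((c0 / 2) * (partialDeg n V (i + 1) : ℝ) ^ (n - i) * Delta n V i)

/-- The interval `ℛ^l_{s,τ}(V) = [τ δ_s(V)^{n-(s+l)} Δ_s(V), τ δ_{s+1}(V)^{n-(s+l)} Δ_s(V)]`,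
where `δ_{n-d+1}(V) = ∞` makes the last interval a half-line. -/
def RlSet (τ : ℝ) (l : ℕ) (V : Set (Fin n → ℂ)) (s : ℕ) : Set ℝ :=
  if s = n - dim n V then
    Set.Ici (τ * (partialDeg n V s : ℝ) ^ (n - (s + l)) * Delta n V s)
  else
    Set.Icc (τ * (partialDeg n V s : ℝ) ^ (n - (s + l)) * Delta n V s)
      (τ * (partialDeg n V (s + 1) : ℝ) ^ (n - (s + l)) * Delta n V s)

/-- The ideal `I(V)` of polynomials vanishing on `V ⊆ ℂⁿ`. -/
def vanishingIdeal (V : Set (Fin n → ℂ)) : Ideal (MvPolynomial (Fin n) ℂ) where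
  carrier := {f | ∀ x ∈ V, eval x f = 0}
  add_mem' := by
    intro a b ha hb x hx
    simp [ha x hx, hb x hx]
  zero_mem' := by
    intro x hx
    simp
  smul_mem' := by
    intro c f hf x hx
    simp [smul_eq_mul, hf x hx]

/-- The ideal `I_ℝ(V)` of real polynomials vanishing on `V ⊆ ℂⁿ`. -/
def vanishingIdealR (V : Set (Fin n → ℂ)) : Ideal (MvPolynomial (Fin n) ℝ) :=
  (vanishingIdeal n V).comap (MvPolynomial.map (algebraMap ℝ ℂ))

/-- The affine Hilbert function `H_{I(V)}(m) = dim_ℂ ℂ[x]_{≤ m} / I(V)_{≤ m}`, realised as the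
dimension of the image of the space of polynomials of total degree at most `m` in the quotient
ring `ℂ[x]/I(V)`. -/
def hilbert (V : Set (Fin n → ℂ)) (m : ℕ) : ℕ :=
  Module.finrank ℂ
    (Submodule.map (Ideal.Quotient.mkₐ ℂ (vanishingIdeal n V)).toLinearMap
      (restrictTotalDegree (Fin n) ℂ m))

/-- The real affine Hilbert function `H_{I(V),ℝ}(m) = dim_ℝ ℝ[x]_{≤ m} / I_ℝ(V)_{≤ m}`. -/
def hilbertR (V : Set (Fin n → ℂ)) (m : ℕ) : ℕ :=
  Module.finrank ℝ
    (Submodule.map (Ideal.Quotient.mkₐ ℝ (vanishingIdealR n V)).toLinearMap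
      (restrictTotalDegree (Fin n) ℝ m))

/-- The inclusion `ℝⁿ → ℂⁿ`. -/
def toC (x : Fin n → ℝ) : Fin n → ℂ := fun i => (x i : ℂ)

/-- The set of real points of `V ⊆ ℂⁿ`. -/
def realPts (V : Set (Fin n → ℂ)) : Set (Fin n → ℝ) := {x | toC n x ∈ V}

/-- The real zero set of a real polynomial. -/
def zeroSetR (g : MvPolynomial (Fin n) ℝ) : Set (Fin n → ℝ) := {x | eval x g = 0}

/-- The zero locus of the polynomials `P 1, …, P i` (the first `i` members of a tuple of
polynomials indexed from `1`). -/
def zeroLocusUpTo (P : ℕ → MvPolynomial (Fin n) ℂ) (i : ℕ) : Set (Fin n → ℂ) :=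
  zeroLocus n {f | ∃ j : ℕ, 1 ≤ j ∧ j ≤ i ∧ f = P j}

/-- `V'` is an `(n-s)`-minimal variety of the irreducible variety `V`. -/
def IsMinimalVariety (V V' : Set (Fin n → ℂ)) (s : ℕ) : Prop :=
  IsIrredVariety n V' ∧ V ⊆ V' ∧ dim n V' = n - s ∧
    ∀ f ∈ vanishingIdeal n V, f ∉ vanishingIdeal n V' →
      partialDegE n V (s + 1) ≤ (f.totalDegree : ℕ∞)

/-- `S` is `(k,b)`-free with respect to `T`, for the incidence relation `R`. -/
def KBFree {α β : Type*} (R : α → β → Prop) (S : Finset α) (T : Finset β) (k b : ℕ) : Prop :=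
  ¬ ∃ (P : Finset α) (B : Finset β), P ⊆ S ∧ B ⊆ T ∧ P.card = k ∧ B.card = b ∧
      ∀ s ∈ P, ∀ t ∈ B, R s t

/-- The number of incidences between a finite set of points and a finite family of sets. -/
def incCountAbs {α : Type*} (S : Finset α) (T : Finset (Set α)) : ℕ :=
  ∑ t ∈ T, (↑S ∩ t).ncard

/-- The number of incidences between a finite set of real points and a finite family of
subsets of `ℂⁿ`. -/
def incCount (S : Finset (Fin n → ℝ)) (T : Finset (Set (Fin n → ℂ))) : ℕ :=
  ∑ t ∈ T, (↑S ∩ toC n ⁻¹' t).ncard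

/-- The total degree `deg T = ∑_{t ∈ T} deg t` of a finite family of algebraic sets. -/
def degFamily (T : Finset (Set (Fin n → ℂ))) : ℕ := ∑ t ∈ T, degreeSum n t

/-- The total degree of a finite family of irreducible varieties. -/
def degFamilyIrred (T : Finset (Set (Fin n → ℂ))) : ℕ := ∑ t ∈ T, degree n t

/-- `α_k(d)`. -/
def alpha (k d : ℕ) : ℝ :=
  if k = 1 ∧ d = 1 then 0 else (k : ℝ) * ((d : ℝ) - 1) / ((d : ℝ) * (k : ℝ) - 1)

/-- `β_k(d)`. -/
def beta (k d : ℕ) : ℝ :=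
  if k = 1 ∧ d = 1 then 1 else (d : ℝ) * ((k : ℝ) - 1) / ((d : ℝ) * (k : ℝ) - 1)

/-- `τ_d(b,k) = b^{1-β_k(d)} k^{1-α_k(d)}`. -/
def tauC (d b k : ℕ) : ℝ := (b : ℝ) ^ (1 - beta k d) * (k : ℝ) ^ (1 - alpha k d)

/-- The Chardin–Philippon property of the constant `c₀`: for every pure-dimensional algebraic
set `W ⊆ ℂⁿ` and every `m ≥ 2 (n - dim W) δ(W)` one has `H_{I(W)}(m) ≥ c₀ m^{dim W} deg W`. -/
def ChardinPhilippon (c0 : ℝ) : Prop :=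
  ∀ (W : Set (Fin n → ℂ)) (e : ℕ), IsAlgSetOfDim n W e →
    ∀ m : ℕ, 2 * (n - e) * deltaSet n W ≤ m →
      c0 * (m : ℝ) ^ e * (degreeSum n W : ℝ) ≤ (hilbert n W m : ℝ)

/-- The defining property of the constant `c₁`: for every irreducible variety `V`, every
positive integer lies in some interval `ℛ_i(V)` with `i` admissible with respect to `V`. -/
def CoversPositiveIntegers (c0 c1 : ℝ) : Prop :=
  ∀ V : Set (Fin n → ℂ), IsIrredVariety n V →
    ∀ m : ℕ, 0 < m → ∃ i, Admissible n V i ∧ (m : ℝ) ∈ RSet n c0 c1 V i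

/-- `i_V(M)`: the smallest admissible `i` such that `M^{n-i} Δ_i(V) ∈ ℛ_i(V)`. -/
def iV (c0 c1 : ℝ) (V : Set (Fin n → ℂ)) (M : ℕ) : ℕ :=
  sInf {i | Admissible n V i ∧ (M : ℝ) ^ (n - i) * Delta n V i ∈ RSet n c0 c1 V i}

/-- A real polynomial bisects a finite set `S ⊆ ℝⁿ` if it is positive on at most half of `S`
and negative on at most half of `S`. -/
def Bisects (g : MvPolynomial (Fin n) ℝ) (S : Finset (Fin n → ℝ)) : Prop :=
  ((↑S ∩ {x | 0 < eval x g}).ncard : ℝ) ≤ (S.card : ℝ) / 2 ∧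
    ((↑S ∩ {x | eval x g < 0}).ncard : ℝ) ≤ (S.card : ℝ) / 2

/-- The set of `r`-rich points of a family `T`: points lying in at least `r` members of `T`. -/
def richPts (T : Finset (Set (Fin n → ℂ))) (r : ℕ) : Set (Fin n → ℂ) :=
  {x | r ≤ ({t | t ∈ T ∧ x ∈ t} : Set (Set (Fin n → ℂ))).ncard}

/-- A real hypersurface of degree at most `D`: the real zero set of a nonzero real polynomial
of degree at most `D`. -/
def IsRealHypersurfaceDegLE (t : Set (Fin n → ℝ)) (D : ℕ) : Prop :=
  ∃ p : MvPolynomial (Fin n) ℝ, p ≠ 0 ∧ t = zeroSetR n p ∧ p.totalDegree ≤ D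

/-- Lexicographic comparison of the tuples `(f 1, …, f m)` and `(g 1, …, g m)`. -/
def LexLE (m : ℕ) (f g : ℕ → ℕ) : Prop :=
  (∀ j ∈ Finset.Icc 1 m, f j = g j) ∨
    ∃ i ∈ Finset.Icc 1 m, (∀ j, 1 ≤ j → j < i → f j = g j) ∧ f i < g i

/-!
The polynomials are chosen one at a time by prime avoidance. Let `I` be the ideal of `V` and let
`δᵢ` be the least `δ` such that every prime between the polynomials of degree at most `δ` in `I`
and `I` has codimension at least `i`. Given `f₁, …, fᵢ` cutting out codimension `i` around `V`,
some `f ∈ I` of degree at most `δᵢ₊₁` avoids the finitely many minimal primes of `(f₁, …, fᵢ)` that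
lie in `I` and have codimension `i`. So `V` is a component of `Z(f₁, …, f_{n-d})` with
`deg fᵢ ≤ δᵢ`, and it remains to show `∏ δᵢ ≤ C(n) deg V`.

For this we follow the Hilbert function `H` of `I`. In degrees below `δᵢ₊₁` it agrees with the
Hilbert function of a prime `P` of codimension at most `i`. A linear Noether normalisation
`y₁, …, yₑ` of `ℂ[x] / P` and a zero estimate show that `H_P` grows from `m` to `M` at
least as fast as the number of monomials in `e` variables. Hence `H(M)` is at least a
constant times `δ₁ ⋯ δᵢ Mⁿ⁻ⁱ` as long as `δᵢ ≤ M < δᵢ₊₁`. Conversely, `H(M)` is at most the rank of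
`ℂ[x] / I` over `ℂ[y]` times the number of monomials of degree at most `M` in `d` variables, and a
generic fibre of `y` is the intersection of `V` with an affine subspace of dimension `n - d` in
that many points, so the rank is at most `deg V`.
-/

/-! ### Linear Noether normalisation -/

section LinearNoetherNormalization

variable {K A ι : Type*} [Field K] [CommRing A] [Algebra K A]

variable (K) in
/-- The linear span of `1` and of the elements `x i`. Its power `unitalSpan K x ^ m` consists of
the values at `x` of the polynomials of total degree at most `m`. -/
def unitalSpan (x : ι → A) : Submodule K A :=
  Submodule.span K (insert 1 (Set.range x))

lemma one_mem_unitalSpan (x : ι → A) : (1 : A) ∈ unitalSpan K x :=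
  Submodule.subset_span (Set.mem_insert _ _)

lemma apply_mem_unitalSpan (x : ι → A) (i : ι) : x i ∈ unitalSpan K x :=
  Submodule.subset_span (Set.mem_insert_of_mem _ ⟨i, rfl⟩)

lemma span_range_le_unitalSpan (x : ι → A) : Submodule.span K (Set.range x) ≤ unitalSpan K x :=
  Submodule.span_mono (Set.subset_insert _ _)

lemma unitalSpan_le {x : ι → A} {Z : Submodule K A} (one_mem : 1 ∈ Z) (hx : ∀ i, x i ∈ Z) :
    unitalSpan K x ≤ Z := by
  rw [unitalSpan, Submodule.span_le]
  rintro _ (rfl | ⟨i, rfl⟩)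
  exacts [one_mem, hx i]

lemma pow_le_pow_of_one_mem {X : Submodule K A} (h : (1 : A) ∈ X) {m k : ℕ} (hmk : m ≤ k) :
    X ^ m ≤ X ^ k :=
  pow_le_pow_right' (Submodule.one_le.2 h) hmk

lemma pow_add_le_mul_pow {X Y : Submodule K A} {G : ℕ} (h : X ^ (G + 1) ≤ X ^ G * Y) (j : ℕ) :
    X ^ (G + j) ≤ X ^ G * Y ^ j := by
  induction j with
  | zero => simp
  | succ j ih =>
    calc X ^ (G + j + 1) ≤ (X ^ G * Y ^ j) * X := by rw [pow_succ]; exact mul_le_mul' ih le_rfl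
      _ = X ^ (G + 1) * Y ^ j := by rw [pow_succ, mul_right_comm]
      _ ≤ (X ^ G * Y) * Y ^ j := mul_le_mul' h le_rfl
      _ = X ^ G * Y ^ (j + 1) := by rw [pow_succ', mul_assoc]

lemma pow_succ_le_mul_pow_sup {X X' : Submodule K A} {t : A} (ht : t ∈ X)
    (hX : X ≤ X' ⊔ Submodule.span K {t}) (d : ℕ) :
    X ^ (d + 1) ≤ X' * X ^ d ⊔ Submodule.span K {t ^ (d + 1)} := by
  induction d with
  | zero => simpa using hX
  | succ d ih =>
    have ht' : Submodule.span K {t} ≤ X := by simpa using ht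
    calc X ^ (d + 1 + 1) = X * X ^ (d + 1) := pow_succ' _ _
      _ ≤ (X' ⊔ Submodule.span K {t}) * X ^ (d + 1) := mul_le_mul' hX le_rfl
      _ = X' * X ^ (d + 1) ⊔ Submodule.span K {t} * X ^ (d + 1) := Submodule.sup_mul _ _ _
      _ ≤ X' * X ^ (d + 1) ⊔
          Submodule.span K {t} * (X' * X ^ d ⊔ Submodule.span K {t ^ (d + 1)}) :=
        sup_le_sup le_rfl (mul_le_mul' le_rfl ih)
      _ ≤ X' * X ^ (d + 1) ⊔ Submodule.span K {t ^ (d + 1 + 1)} := by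
        rw [Submodule.mul_sup, mul_left_comm, Submodule.span_mul_span,
          Set.singleton_mul_singleton, ← pow_succ', ← sup_assoc, pow_succ' X d]
        exact sup_le_sup (sup_le le_rfl (mul_le_mul' le_rfl (mul_le_mul' ht' le_rfl))) le_rfl

lemma multiset_prod_map_mem_pow {X : Submodule K A} {x : ι → A} (hx : ∀ i, x i ∈ X)
    (s : Multiset ι) : (s.map x).prod ∈ X ^ Multiset.card s := by
  induction s using Multiset.induction_on with
  | empty => exact Submodule.one_le.1 le_rfl
  | cons i s ih =>
    rw [Multiset.map_cons, Multiset.prod_cons, Multiset.card_cons, pow_succ']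
    exact Submodule.mul_mem_mul (hx i) ih

lemma multiset_prod_map_cons_sub_mem {X X' : Submodule K A} {x : ι → A} {w : ι → K} {t : A}
    (hx : ∀ i, x i ∈ X) (ht : t ∈ X) (h : ∀ i, x i - w i • t ∈ X') (s : Multiset ι) (i : ι) :
    ((i ::ₘ s).map x).prod - ((i ::ₘ s).map w).prod • t ^ Multiset.card (i ::ₘ s) ∈
      X' * X ^ Multiset.card s := by
  induction s using Multiset.induction_on generalizing i with
  | empty => simpa using h i
  | cons j s ih =>
    have split : ((i ::ₘ j ::ₘ s).map x).prod -
          ((i ::ₘ j ::ₘ s).map w).prod • t ^ Multiset.card (i ::ₘ j ::ₘ s) =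
        (x i - w i • t) * ((j ::ₘ s).map x).prod + (w i • t) * (((j ::ₘ s).map x).prod -
          ((j ::ₘ s).map w).prod • t ^ Multiset.card (j ::ₘ s)) := by
      simp only [Multiset.map_cons, Multiset.prod_cons, Multiset.card_cons, Algebra.smul_def,
        map_mul]
      ring
    rw [split]
    refine Submodule.add_mem _ (Submodule.mul_mem_mul (h i) (multiset_prod_map_mem_pow hx _)) ?_
    have := Submodule.mul_mem_mul (Submodule.smul_mem X (w i) ht) (ih j)
    rwa [mul_left_comm, ← pow_succ', ← Multiset.card_cons j] at this

lemma prod_map_toMultiset {M : Type*} [CommMonoid M] (x : ι → M) (s : ι →₀ ℕ) :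
    (s.toMultiset.map x).prod = s.prod fun i e ↦ x i ^ e := by
  rw [Finsupp.toMultiset_map, Finsupp.prod_toMultiset, Finsupp.prod_mapDomain_index]
  · simp
  · intros; rw [pow_add]

lemma card_toMultiset_eq_degree (s : ι →₀ ℕ) : Multiset.card s.toMultiset = s.degree :=
  s.card_toMultiset

lemma aeval_monomial_mem_pow {X : Submodule K A} {x : ι → A} (hx : ∀ i, x i ∈ X)
    (s : ι →₀ ℕ) (a : K) : aeval x (monomial s a) ∈ X ^ s.degree := by
  rw [aeval_monomial, ← Algebra.smul_def, ← prod_map_toMultiset]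
  rw [← card_toMultiset_eq_degree]
  exact Submodule.smul_mem _ _ (multiset_prod_map_mem_pow hx _)

lemma aeval_monomial_sub_mem {X X' : Submodule K A} {x : ι → A} {w : ι → K} {t : A}
    (hx : ∀ i, x i ∈ X) (ht : t ∈ X) (h : ∀ i, x i - w i • t ∈ X') {s : ι →₀ ℕ} {d : ℕ}
    (hs : s.degree = d + 1) (a : K) :
    aeval x (monomial s a) - eval w (monomial s a) • t ^ (d + 1) ∈ X' * X ^ d := by
  have card_eq : Multiset.card s.toMultiset = d + 1 := (card_toMultiset_eq_degree s).trans hs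
  obtain ⟨i, s', hs'⟩ : ∃ i s', s.toMultiset = i ::ₘ s' := by
    obtain ⟨i, hi⟩ := Multiset.card_pos_iff_exists_mem.1 (card_eq.symm.le.trans_lt' d.succ_pos)
    exact ⟨i, Multiset.exists_cons_of_mem hi⟩
  have card_eq' : Multiset.card s' = d := by simpa [hs'] using card_eq
  have := multiset_prod_map_cons_sub_mem hx ht h s' i
  rw [← hs', card_eq, card_eq', prod_map_toMultiset, prod_map_toMultiset] at this
  rw [aeval_monomial, eval_monomial, ← Algebra.smul_def, mul_smul, ← smul_sub]
  exact Submodule.smul_mem _ _ this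

lemma aeval_sub_eval_homogeneousComponent_mem {X X' : Submodule K A} {x : ι → A} {w : ι → K}
    {t : A} (one_mem : 1 ∈ X) (one_mem' : 1 ∈ X') (hx : ∀ i, x i ∈ X) (ht : t ∈ X)
    (h : ∀ i, x i - w i • t ∈ X') {p : MvPolynomial ι K} {d : ℕ} (hp : p.totalDegree ≤ d + 1) :
    aeval x p - eval w (homogeneousComponent (d + 1) p) • t ^ (d + 1) ∈ X' * X ^ d := by
  let φ : MvPolynomial ι K →ₗ[K] A := (aeval x).toLinearMap -
    ((aeval w).toLinearMap ∘ₗ homogeneousComponent (d + 1)).smulRight (t ^ (d + 1))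
  have φ_apply (q) : φ q = aeval x q - eval w (homogeneousComponent (d + 1) q) • t ^ (d + 1) := by
    simp [φ, aeval_eq_eval]
  rw [← φ_apply, p.as_sum, map_sum]
  refine Submodule.sum_mem _ fun s hs ↦ ?_
  have hsd : s.degree ≤ d + 1 := (le_totalDegree hs).trans hp
  rw [φ_apply, homogeneousComponent_of_mem (isHomogeneous_monomial _ rfl)]
  rcases hsd.eq_or_lt with hsd | hsd
  · rw [if_pos hsd.symm]
    exact aeval_monomial_sub_mem hx ht h hsd _
  · rw [if_neg hsd.ne', map_zero, zero_smul, sub_zero, ← one_mul (aeval x _)]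
    exact Submodule.mul_mem_mul one_mem' <|
      pow_le_pow_of_one_mem one_mem (Nat.lt_succ_iff.1 hsd) (aeval_monomial_mem_pow hx s _)

lemma homogeneousComponent_totalDegree_ne_zero {p : MvPolynomial ι K} (hp : p ≠ 0) :
    homogeneousComponent p.totalDegree p ≠ 0 := by
  intro h
  obtain ⟨s, hs, hs'⟩ := Finset.exists_mem_eq_sup p.support (by simpa using hp)
    (fun s ↦ s.sum fun _ e ↦ e)
  have hs' : s.degree = p.totalDegree := hs'.symm
  have : coeff s (homogeneousComponent p.totalDegree p) = 0 := by rw [h, coeff_zero]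
  rw [coeff_homogeneousComponent, if_pos hs'] at this
  exact mem_support_iff.1 hs this

lemma eval_smul_of_isHomogeneous {F : MvPolynomial ι K} {d : ℕ} (hF : F.IsHomogeneous d)
    (c : K) (v : ι → K) : eval (c • v) F = c ^ d * eval v F := by
  simp only [eval_eq, Finset.mul_sum]
  refine Finset.sum_congr rfl fun s hs ↦ ?_
  simp only [Pi.smul_apply, smul_eq_mul, mul_pow, Finset.prod_mul_distrib,
    Finset.prod_pow_eq_pow_sum, ← hF.degree_eq_sum_deg_support hs]
  ring

lemma exists_coord_eq_one_eval_ne_zero [Infinite K] {F : MvPolynomial ι K} {d : ℕ}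
    (hF : F.IsHomogeneous (d + 1)) (hF0 : F ≠ 0) : ∃ j w, w j = 1 ∧ eval w F ≠ 0 := by
  obtain ⟨v, hv⟩ : ∃ v, eval v F ≠ 0 := by
    by_contra! h
    exact hF0 (hF.eq_zero_of_forall_eval_eq_zero h)
  obtain ⟨j, hj⟩ : ∃ j, v j ≠ 0 := by
    by_contra! h
    have hv0 : v = (0 : K) • v := by rw [zero_smul]; exact funext h
    rw [hv0, eval_smul_of_isHomogeneous hF, zero_pow d.succ_ne_zero, zero_mul] at hv
    exact hv rfl
  refine ⟨j, (v j)⁻¹ • v, inv_mul_cancel₀ hj, ?_⟩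
  rw [eval_smul_of_isHomogeneous hF]
  exact mul_ne_zero (pow_ne_zero _ (inv_ne_zero hj)) hv

lemma exists_aeval_eq_zero_totalDegree_eq_succ [Nontrivial A] {x : ι → A}
    (hx : ¬ AlgebraicIndependent K x) :
    ∃ p : MvPolynomial ι K, p ≠ 0 ∧ aeval x p = 0 ∧ ∃ d, p.totalDegree = d + 1 := by
  rw [algebraicIndependent_iff] at hx
  push Not at hx
  obtain ⟨p, hpx, hp⟩ := hx
  refine ⟨p, hp, hpx, Nat.exists_eq_succ_of_ne_zero fun h ↦ hp ?_⟩
  rw [totalDegree_eq_zero_iff_eq_C] at h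
  rw [h, aeval_C, map_eq_zero_iff _ (algebraMap K A).injective] at hpx
  rw [h, hpx, map_zero]

lemma exists_linear_elimination [Infinite K] [Nontrivial A] {k : ℕ} {x : Fin (k + 1) → A}
    (hx : ¬ AlgebraicIndependent K x) :
    ∃ x' : Fin k → A, (∀ i, x' i ∈ Submodule.span K (Set.range x)) ∧
      ∃ G, unitalSpan K x ^ (G + 1) ≤ unitalSpan K x ^ G * unitalSpan K x' := by
  obtain ⟨p, hp0, hpx, d, hd⟩ := exists_aeval_eq_zero_totalDegree_eq_succ hx
  obtain ⟨j, w, hwj, hw⟩ := exists_coord_eq_one_eval_ne_zero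
    (homogeneousComponent_isHomogeneous (d + 1) p)
    (hd ▸ homogeneousComponent_totalDegree_ne_zero hp0)
  let x' : Fin k → A := fun i ↦ x (j.succAbove i) - w (j.succAbove i) • x j
  have sub_mem (i) : x i - w i • x j ∈ unitalSpan K x' := by
    rcases eq_or_ne i j with rfl | hij
    · simp [hwj]
    · obtain ⟨l, rfl⟩ := Fin.exists_succAbove_eq hij
      exact apply_mem_unitalSpan x' l
  have le_sup : unitalSpan K x ≤ unitalSpan K x' ⊔ Submodule.span K {x j} := by
    refine unitalSpan_le (Submodule.mem_sup_left (one_mem_unitalSpan x')) fun i ↦ ?_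
    rw [← sub_add_cancel (x i) (w i • x j)]
    exact Submodule.add_mem_sup (sub_mem i)
      (Submodule.smul_mem _ _ (Submodule.mem_span_singleton_self _))
  -- The relation `p x = 0` expresses `x j ^ (d + 1)` through `x'` and lower powers of `x j`.
  have pow_mem : x j ^ (d + 1) ∈ unitalSpan K x' * unitalSpan K x ^ d := by
    have := aeval_sub_eval_homogeneousComponent_mem (one_mem_unitalSpan x)
      (one_mem_unitalSpan x') (apply_mem_unitalSpan x) (apply_mem_unitalSpan x j) sub_mem hd.le
    rwa [hpx, zero_sub, Submodule.neg_mem_iff, Submodule.smul_mem_iff _ hw] at this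
  refine ⟨x', fun i ↦ ?_, d, ?_⟩
  · exact Submodule.sub_mem _ (Submodule.subset_span ⟨_, rfl⟩)
      (Submodule.smul_mem _ _ (Submodule.subset_span ⟨_, rfl⟩))
  · rw [mul_comm (unitalSpan K x ^ d)]
    exact (pow_succ_le_mul_pow_sup (apply_mem_unitalSpan x j) le_sup d).trans
      (sup_le le_rfl (by simpa using pow_mem))

theorem exists_linear_noether_normalization [Infinite K] [Nontrivial A] {k : ℕ} (x : Fin k → A) :
    ∃ (e : ℕ) (y : Fin e → A), (∀ i, y i ∈ Submodule.span K (Set.range x)) ∧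
      AlgebraicIndependent K y ∧
        ∃ G, unitalSpan K x ^ (G + 1) ≤ unitalSpan K x ^ G * unitalSpan K y := by
  induction k with
  | zero =>
    refine ⟨0, x, fun i ↦ i.elim0, ?_, 0, by simp⟩
    rw [algebraicIndependent_empty_type_iff]
    exact (algebraMap K A).injective
  | succ k ih =>
    by_cases hx : AlgebraicIndependent K x
    · exact ⟨k + 1, x, fun i ↦ Submodule.subset_span ⟨i, rfl⟩, hx, 0, by simp⟩
    obtain ⟨x', hx', G, hG⟩ := exists_linear_elimination hx
    obtain ⟨e, y, hy, hyi, G', hG'⟩ := ih x'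
    have le : unitalSpan K x' ≤ unitalSpan K x :=
      unitalSpan_le (one_mem_unitalSpan x) fun i ↦ span_range_le_unitalSpan x (hx' i)
    refine ⟨e, y, fun i ↦ ?_, hyi, G + G', ?_⟩
    · exact (Submodule.span_le.2 (Set.range_subset_iff.2 hx') : _ ≤ _) (hy i)
    · calc unitalSpan K x ^ (G + G' + 1) ≤ unitalSpan K x ^ G * unitalSpan K x' ^ (G' + 1) :=
            pow_add_le_mul_pow hG (G' + 1)
        _ ≤ unitalSpan K x ^ G * (unitalSpan K x' ^ G' * unitalSpan K y) := mul_le_mul' le_rfl hG'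
        _ ≤ unitalSpan K x ^ G * (unitalSpan K x ^ G' * unitalSpan K y) :=
            mul_le_mul' le_rfl (mul_le_mul' (pow_le_pow_left' le _) le_rfl)
        _ = unitalSpan K x ^ (G + G') * unitalSpan K y := by rw [← mul_assoc, ← pow_add]

end LinearNoetherNormalization

/-! ### Counting monomials of bounded degree -/

section MonomialCount

/-- The number `(T + e).choose e` of monomials of degree at most `T` in `e` variables. -/
def monomialCount (e T : ℕ) : ℕ := (T + e).choose e

lemma monomialCount_zero_left (T : ℕ) : monomialCount 0 T = 1 := by simp [monomialCount]

lemma monomialCount_succ_succ (e T : ℕ) :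
    monomialCount (e + 1) (T + 1) = monomialCount (e + 1) T + monomialCount e (T + 1) := by
  rw [monomialCount, ← add_assoc, Nat.choose_succ_succ', add_comm]
  simp only [monomialCount, add_assoc, add_comm 1]

lemma monomialCount_le (e T : ℕ) : monomialCount e T ≤ (T + 1) ^ e := by
  induction e with
  | zero => simp [monomialCount]
  | succ e ih =>
    refine Nat.le_of_mul_le_mul_right (c := e + 1) ?_ e.succ_pos
    calc monomialCount (e + 1) T * (e + 1) = (T + e + 1) * monomialCount e T :=
          (Nat.add_one_mul_choose_eq (T + e) e).symm
      _ ≤ (T + 1) * (e + 1) * (T + 1) ^ e := Nat.mul_le_mul (by nlinarith) ih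
      _ = (T + 1) ^ (e + 1) * (e + 1) := by ring

lemma pow_le_factorial_mul_monomialCount (e T : ℕ) :
    (T + 1) ^ e ≤ e.factorial * monomialCount e T := by
  have h := Nat.pow_le_choose (α := ℝ) e (T + e)
  rw [show T + e + 1 - e = T + 1 by lia, div_le_iff₀' (by positivity)] at h
  exact_mod_cast h

lemma monomialCount_add_le (e T j : ℕ) :
    monomialCount (e + 1) (T + j) ≤ monomialCount (e + 1) T + j * (T + j + 1) ^ e := by
  induction j with
  | zero => simp
  | succ j ih =>
    have le := monomialCount_le e (T + j + 1)
    have mono : (T + j + 1) ^ e ≤ (T + j + 1 + 1) ^ e := Nat.pow_le_pow_left (by lia) _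
    rw [← add_assoc, monomialCount_succ_succ]
    nlinarith

lemma exists_monomialCount_lt_add (e m M : ℕ) :
    ∃ k, 0 < k ∧ monomialCount e ((m + 1) * k + M) <
      monomialCount e k + monomialCount e ((m + 1) * k - 1) := by
  rcases e with _ | e
  · exact ⟨1, one_pos, by simp [monomialCount_zero_left]⟩
  set c := (M + 1) * (m + M + 2) ^ e with hc
  set k := c * (e + 1).factorial + 1
  have k_pos : 0 < k := by lia
  have one_le : 1 ≤ (m + 1) * k := Nat.mul_pos m.succ_pos k_pos
  refine ⟨k, k_pos, ?_⟩
  by_contra! h_le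
  have increment_le := monomialCount_add_le e ((m + 1) * k - 1) (M + 1)
  rw [show (m + 1) * k - 1 + (M + 1) = (m + 1) * k + M by lia] at increment_le
  have count_le : monomialCount (e + 1) k ≤ c * k ^ e := calc
    _ ≤ (M + 1) * ((m + 1) * k + M + 1) ^ e := by lia
    _ ≤ (M + 1) * ((m + M + 2) * k) ^ e := by gcongr; nlinarith
    _ = c * k ^ e := by rw [hc, mul_assoc, ← mul_pow]
  have le_count : (k + 1) ^ (e + 1) ≤ (e + 1).factorial * monomialCount (e + 1) k :=
    pow_le_factorial_mul_monomialCount (e + 1) k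
  have k_lt : k ^ e * (k + 1) ≤ k ^ e * ((e + 1).factorial * c) := calc
    _ ≤ (k + 1) ^ e * (k + 1) := by gcongr; lia
    _ ≤ (e + 1).factorial * (c * k ^ e) := le_count.trans (by gcongr)
    _ = k ^ e * ((e + 1).factorial * c) := by ring
  have := Nat.le_of_mul_le_mul_left k_lt (by positivity)
  rw [mul_comm] at this
  lia

variable (σ : Type*)

lemma setOf_degree_le_succ [Fintype σ] [DecidableEq σ] (T : ℕ) :
    {s : σ →₀ ℕ | s.degree ≤ T + 1} = {s : σ →₀ ℕ | s.degree ≤ T} ∪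
      ((Finset.univ : Finset σ).finsuppAntidiag (T + 1) : Set (σ →₀ ℕ)) := by
  ext s
  have degree_eq : s.degree = Finset.univ.sum s := Finsupp.degree_eq_sum s
  simp only [Set.mem_ofPred_eq, Set.mem_union, Finset.mem_coe, Finset.mem_finsuppAntidiag,
    Finset.subset_univ, and_true, ← degree_eq]
  lia

lemma ncard_setOf_degree_le [Fintype σ] (T : ℕ) :
    {s : σ →₀ ℕ | s.degree ≤ T}.ncard = monomialCount (Fintype.card σ) T := by
  classical
  rw [monomialCount, add_comm, Nat.choose_symm_add]
  induction T with
  | zero =>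
    have eq_singleton : {s : σ →₀ ℕ | s.degree ≤ 0} = {0} := by
      ext s
      simp [Finsupp.degree_eq_zero_iff]
    rw [eq_singleton, Set.ncard_singleton, Nat.choose_zero_right]
  | succ T ih =>
    rw [setOf_degree_le_succ, Set.ncard_union_eq _ (Finsupp.finite_of_degree_le T)
      (Finset.finite_toSet _), ih, Set.ncard_coe_finset,
      Finset.card_finsuppAntidiag_nat_eq_choose, Finset.card_univ, ← add_assoc,
      Nat.choose_succ_succ, Nat.add_sub_cancel]
    refine Set.disjoint_left.2 fun s hs hs' ↦ ?_
    have degree_eq : s.degree = Finset.univ.sum s := Finsupp.degree_eq_sum s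
    have sum_eq := (Finset.mem_finsuppAntidiag.1 hs').1
    rw [Set.mem_ofPred_eq] at hs
    lia

lemma restrictTotalDegree_eq_restrictSupport (R : Type*) [CommSemiring R] (T : ℕ) :
    restrictTotalDegree σ R T = restrictSupport R {s : σ →₀ ℕ | s.degree ≤ T} := by
  ext p
  rw [mem_restrictTotalDegree, mem_restrictSupport_iff]
  exact ⟨fun h s hs ↦ (le_totalDegree hs).trans h, fun h ↦ Finset.sup_le fun s hs ↦ h hs⟩

lemma finrank_restrictTotalDegree [Fintype σ] (K : Type*) [Field K] (T : ℕ) :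
    Module.finrank K (restrictTotalDegree σ K T) = monomialCount (Fintype.card σ) T := by
  rw [restrictTotalDegree_eq_restrictSupport,
    Module.finrank_eq_nat_card_basis (basisRestrictSupport K _), Nat.card_coe_set_eq,
    ncard_setOf_degree_le]

instance [Finite σ] (T : ℕ) : Finite {s : σ →₀ ℕ // s.degree ≤ T} :=
  Finsupp.finite_of_degree_le T

end MonomialCount

/-! ### Polynomials of bounded degree, and orders of vanishing -/

section VanishingOrder

variable {K A ι : Type*} [Field K] [CommRing A] [Algebra K A]

lemma aeval_mem_pow {x : ι → A} {Z : Submodule K A} (one_mem : 1 ∈ Z) (hx : ∀ i, x i ∈ Z) {T : ℕ}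
    {p : MvPolynomial ι K} (hp : p.totalDegree ≤ T) : aeval x p ∈ Z ^ T := by
  rw [p.as_sum, map_sum]
  exact Submodule.sum_mem _ fun s hs ↦ pow_le_pow_of_one_mem one_mem
    ((le_totalDegree hs).trans hp) (aeval_monomial_mem_pow hx s _)

lemma unitalSpan_pow_eq (x : ι → A) (T : ℕ) :
    unitalSpan K x ^ T = (restrictTotalDegree ι K T).map (aeval x).toLinearMap := by
  apply le_antisymm
  · induction T with
    | zero =>
      rw [pow_zero, Submodule.one_le]
      exact ⟨1, (mem_restrictTotalDegree _ _ _).2 (by simp), by simp⟩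
    | succ T ih =>
      have le_one : unitalSpan K x ≤ (restrictTotalDegree ι K 1).map (aeval x).toLinearMap :=
        unitalSpan_le ⟨1, (mem_restrictTotalDegree _ _ _).2 (by simp), by simp⟩ fun i ↦
          ⟨X i, (mem_restrictTotalDegree _ _ _).2 (by simp), by simp⟩
      rw [pow_succ]
      refine (mul_le_mul' ih le_one).trans (Submodule.mul_le.2 ?_)
      rintro _ ⟨p, hp, rfl⟩ _ ⟨q, hq, rfl⟩
      rw [SetLike.mem_coe, mem_restrictTotalDegree] at hp hq
      refine ⟨p * q, (mem_restrictTotalDegree _ _ _).2 ?_, by simp⟩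
      exact (totalDegree_mul _ _).trans (add_le_add hp hq)
  · rintro _ ⟨p, hp, rfl⟩
    rw [SetLike.mem_coe, mem_restrictTotalDegree] at hp
    exact aeval_mem_pow (one_mem_unitalSpan x) (apply_mem_unitalSpan x) hp

variable (c : ι → K)

/-- The translation `p ↦ p (X + c)`, which turns orders of vanishing at `c` into orders of
vanishing at the origin. -/
def translate : MvPolynomial ι K →ₐ[K] MvPolynomial ι K := aeval fun i ↦ X i + C (c i)

lemma translate_neg_translate (p : MvPolynomial ι K) : translate (-c) (translate c p) = p := by
  have : (translate (-c)).comp (translate c) = AlgHom.id K _ := by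
    ext1 i
    simp [translate, algHom_C]
  exact DFunLike.congr_fun this p

lemma totalDegree_translate_le (p : MvPolynomial ι K) :
    (translate c p).totalDegree ≤ p.totalDegree := by
  have mem_pow : translate c p ∈ unitalSpan K (X : ι → MvPolynomial ι K) ^ p.totalDegree := by
    refine aeval_mem_pow (one_mem_unitalSpan _) (fun i ↦ ?_) le_rfl
    rw [← mul_one (C (c i)), ← smul_eq_C_mul]
    exact Submodule.add_mem _ (apply_mem_unitalSpan _ i)
      (Submodule.smul_mem _ _ (one_mem_unitalSpan _))
  rw [unitalSpan_pow_eq] at mem_pow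
  obtain ⟨q, hq, hq'⟩ := mem_pow
  rw [AlgHom.toLinearMap_apply, aeval_X_left_apply] at hq'
  rwa [← hq', ← mem_restrictTotalDegree]

lemma constantCoeff_translate (p : MvPolynomial ι K) :
    constantCoeff (translate c p) = eval c p := by
  have : (aeval (0 : ι → K)).comp (translate c) = aeval c := by
    ext i
    simp [translate]
  simpa [aeval_eq_eval, eval_zero'] using DFunLike.congr_fun this p

/-- The ideal of polynomials vanishing to order at least `j` at the point `c`. -/
def vanishingOrderIdeal (j : ℕ) : Ideal (MvPolynomial ι K) :=
  (idealOfVars ι K ^ j).comap (translate c)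

variable {c}

lemma mem_vanishingOrderIdeal {j : ℕ} {p : MvPolynomial ι K} :
    p ∈ vanishingOrderIdeal c j ↔ ∀ s, Finsupp.degree s < j → coeff s (translate c p) = 0 := by
  rw [vanishingOrderIdeal, Ideal.mem_comap, mem_pow_idealOfVars_iff']

lemma vanishingOrderIdeal_pow_le (j k : ℕ) :
    vanishingOrderIdeal c j ^ k ≤ vanishingOrderIdeal c (j * k) := by
  rw [vanishingOrderIdeal, vanishingOrderIdeal, pow_mul]
  exact Ideal.le_comap_pow _ _

lemma eq_zero_of_mem_vanishingOrderIdeal {j : ℕ} {p : MvPolynomial ι K}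
    (h : p ∈ vanishingOrderIdeal c j) (hp : p.totalDegree < j) : p = 0 := by
  suffices translate c p = 0 by rw [← translate_neg_translate c p, this, map_zero]
  ext s
  rcases lt_or_ge s.degree j with hs | hs
  · exact mem_vanishingOrderIdeal.1 h s hs
  · exact coeff_eq_zero_of_totalDegree_lt <|
      ((totalDegree_translate_le c p).trans_lt hp).trans_le hs

lemma mem_vanishingOrderIdeal_of_mul_mem {j : ℕ} {h p : MvPolynomial ι K} (hc : eval c h ≠ 0)
    (hp : h * p ∈ vanishingOrderIdeal c j) : p ∈ vanishingOrderIdeal c j := by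
  rw [vanishingOrderIdeal, Ideal.mem_comap, map_mul] at *
  have sup_eq_top : Ideal.span {translate c h} ⊔ idealOfVars ι K = ⊤ := by
    refine Ideal.eq_top_of_isUnit_mem _ (x := C (eval c h)) ?_ (hc.isUnit.map C)
    rw [← add_sub_cancel (translate c h) (C (eval c h))]
    refine Submodule.add_mem_sup (Ideal.mem_span_singleton_self _) ?_
    rw [← pow_one (idealOfVars ι K), mem_pow_idealOfVars_iff']
    intro s hs
    rw [(Finsupp.degree_eq_zero_iff s).1 (Nat.lt_one_iff.1 hs), coeff_sub, coeff_zero_C,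
      ← constantCoeff_translate, constantCoeff_eq, sub_self]
  -- Hence `translate c h` is invertible modulo the `j`-th power of the ideal of the variables.
  have one_mem : (1 : MvPolynomial ι K) ∈ Ideal.span {translate c h} ⊔ idealOfVars ι K ^ j := by
    rw [Ideal.sup_pow_eq_top sup_eq_top]
    trivial
  obtain ⟨a, ha, b, hb, hab⟩ := Submodule.mem_sup.1 one_mem
  obtain ⟨a, rfl⟩ := Ideal.mem_span_singleton'.1 ha
  rw [← one_mul (translate c p), ← hab, add_mul, mul_assoc]
  exact Ideal.add_mem _ (Ideal.mul_mem_left _ _ hp) (Ideal.mul_mem_right _ _ hb)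

variable (c)

/-- The Taylor coefficients of degree at most `m` at the point `c`. -/
def taylorCoeffs (m : ℕ) : MvPolynomial ι K →ₗ[K] ({s : ι →₀ ℕ // s.degree ≤ m} → K) :=
  LinearMap.pi fun s ↦ lcoeff K s.1 ∘ₗ (translate c).toLinearMap

variable {c}

lemma mem_vanishingOrderIdeal_of_taylorCoeffs_eq_zero {m : ℕ} {p : MvPolynomial ι K}
    (h : taylorCoeffs c m p = 0) : p ∈ vanishingOrderIdeal c (m + 1) :=
  mem_vanishingOrderIdeal.2 fun s hs ↦ congr_fun h ⟨s, Nat.lt_succ_iff.1 hs⟩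

variable (K) in
lemma finrank_taylorCoeffs_codomain [Fintype ι] (m : ℕ) :
    Module.finrank K ({s : ι →₀ ℕ // s.degree ≤ m} → K) = monomialCount (Fintype.card ι) m := by
  have := Fintype.ofFinite {s : ι →₀ ℕ // s.degree ≤ m}
  rw [Module.finrank_pi, ← Nat.card_eq_fintype_card, ← ncard_setOf_degree_le, Set.ncard_def]
  rfl

end VanishingOrder

/-! ### Modules over a linear Noether normalisation -/

section CommonDenominator

variable (R : Type*) {M : Type*} [CommRing R] [IsDomain R] [AddCommGroup M] [Module R M]

lemma exists_linearIndependent_smul_mem_span (S : Finset M) :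
    ∃ (s : ℕ) (g : Fin s → M), LinearIndependent R g ∧ (∀ i, g i ∈ S) ∧
      ∃ h : R, h ≠ 0 ∧ ∀ w ∈ S, h • w ∈ Submodule.span R (range g) := by
  classical
  obtain ⟨I, independent, maximal⟩ := exists_maximal_linearIndepOn R (Subtype.val : S → M)
  have := Fintype.ofFinite I
  let E : Fin (Fintype.card I) ≃ I := (Fintype.equivFin I).symm
  have range_eq : range (fun i ↦ ((E i).1 : M)) = Subtype.val '' I := by
    rw [image_eq_range]
    exact E.surjective.range_comp fun i : I ↦ (i.1 : M)
  have exists_denominator (w : S) : ∃ a : R, a ≠ 0 ∧ a • (w : M) ∈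
      Submodule.span R (Subtype.val '' I) := by
    by_cases hw : w ∈ I
    · exact ⟨1, one_ne_zero, by rw [one_smul]; exact Submodule.subset_span ⟨w, hw, rfl⟩⟩
    · exact maximal w hw
  choose a a_ne_zero a_smul_mem using exists_denominator
  refine ⟨Fintype.card I, fun i ↦ ((E i).1 : M), independent.comp E E.injective,
    fun i ↦ (E i).1.2, ∏ w, a w, Finset.prod_ne_zero_iff.2 fun w _ ↦ a_ne_zero w, fun w hw ↦ ?_⟩
  rw [range_eq, ← Finset.prod_erase_mul _ _ (Finset.mem_univ (⟨w, hw⟩ : S)), mul_smul]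
  exact Submodule.smul_mem _ _ (a_smul_mem ⟨w, hw⟩)

lemma exists_linearIndependent_smul_mem_span_of_fg {K : Type*} [Field K] [Algebra K R]
    [Module K M] [IsScalarTower K R M] {W : Submodule K M} (hW : W.FG) :
    ∃ (s : ℕ) (g : Fin s → M), LinearIndependent R g ∧ (∀ i, g i ∈ W) ∧
      ∃ h : R, h ≠ 0 ∧ ∀ w ∈ W, h • w ∈ Submodule.span R (range g) := by
  obtain ⟨S, rfl⟩ := hW
  obtain ⟨s, g, independent, g_mem, h, h_ne_zero, hS⟩ := exists_linearIndependent_smul_mem_span R S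
  refine ⟨s, g, independent, fun i ↦ Submodule.subset_span (g_mem i), h, h_ne_zero, fun w hw ↦ ?_⟩
  induction hw using Submodule.span_induction with
  | mem w hw => exact hS w hw
  | zero => simp
  | add v w _ _ hv hw => rw [smul_add]; exact Submodule.add_mem _ hv hw
  | smul c w _ hw =>
    rw [← smul_one_smul R c w, smul_comm]
    exact Submodule.smul_mem _ _ hw

end CommonDenominator

section BoundedCombinations

variable {e : ℕ} {K A : Type*} [Field K] [CommRing A] [Algebra K A]
  [Algebra (MvPolynomial (Fin e) K) A] [IsScalarTower K (MvPolynomial (Fin e) K) A]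

/-- The combinations `∑ bᵢ gᵢ` whose coefficients are polynomials `bᵢ` of total degree at most
`T`. -/
def boundedCombinations {s : ℕ} (g : Fin s → A) (T : ℕ) : Submodule K A :=
  (((Fintype.linearCombination (MvPolynomial (Fin e) K) g).restrictScalars K).comp
    ((restrictTotalDegree (Fin e) K T).subtype.compLeft (Fin s))).range

variable {s : ℕ} {g : Fin s → A} {T : ℕ}

lemma mem_boundedCombinations {a : A} :
    a ∈ boundedCombinations (e := e) (K := K) g T ↔ ∃ b : Fin s → MvPolynomial (Fin e) K,
      (∀ i, (b i).totalDegree ≤ T) ∧ ∑ i, b i • g i = a := by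
  constructor
  · rintro ⟨b, rfl⟩
    exact ⟨fun i ↦ (b i).1, fun i ↦ (mem_restrictTotalDegree _ _ _).1 (b i).2,
      by simp [Fintype.linearCombination_apply]⟩
  · rintro ⟨b, hb, rfl⟩
    exact ⟨fun i ↦ ⟨b i, (mem_restrictTotalDegree _ _ _).2 (hb i)⟩,
      by simp [Fintype.linearCombination_apply]⟩

instance : Module.Finite K (boundedCombinations (e := e) (K := K) g T) := by
  unfold boundedCombinations
  infer_instance

lemma finrank_fin_restrictTotalDegree (s T : ℕ) :
    Module.finrank K (Fin s → restrictTotalDegree (Fin e) K T) = s * monomialCount e T := by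
  rw [Module.finrank_pi_fintype]
  simp [finrank_restrictTotalDegree]

variable (g T) in
lemma finrank_boundedCombinations_le :
    Module.finrank K (boundedCombinations (e := e) (K := K) g T) ≤ s * monomialCount e T := by
  rw [← finrank_fin_restrictTotalDegree (K := K)]
  exact LinearMap.finrank_range_le _

variable (T) in
lemma finrank_boundedCombinations (hg : LinearIndependent (MvPolynomial (Fin e) K) g) :
    Module.finrank K (boundedCombinations (e := e) (K := K) g T) = s * monomialCount e T := by
  rw [← finrank_fin_restrictTotalDegree (K := K)]
  refine LinearMap.finrank_range_of_inj fun a b hab ↦ funext fun i ↦ Subtype.ext ?_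
  exact congr_fun (hg.fintypeLinearCombination_injective hab) i

lemma boundedCombinations_mono {T' : ℕ} (h : T ≤ T') :
    boundedCombinations (e := e) (K := K) g T ≤ boundedCombinations (e := e) (K := K) g T' := by
  intro a ha
  obtain ⟨b, hb, hba⟩ := mem_boundedCombinations.1 ha
  exact mem_boundedCombinations.2 ⟨b, fun i ↦ (hb i).trans h, hba⟩

lemma smul_mem_boundedCombinations {M : ℕ} {p : MvPolynomial (Fin e) K} (hp : p.totalDegree ≤ T)
    {a : A} (ha : a ∈ boundedCombinations (e := e) (K := K) g M) :
    p • a ∈ boundedCombinations (e := e) (K := K) g (T + M) := by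
  obtain ⟨b, hb, rfl⟩ := mem_boundedCombinations.1 ha
  refine mem_boundedCombinations.2 ⟨fun i ↦ p * b i, fun i ↦ ?_, ?_⟩
  · exact (totalDegree_mul _ _).trans (add_le_add hp (hb i))
  · simp only [mul_smul, Finset.smul_sum]

lemma exists_mem_boundedCombinations {a : A}
    (ha : a ∈ Submodule.span (MvPolynomial (Fin e) K) (range g)) :
    ∃ T, a ∈ boundedCombinations (e := e) (K := K) g T := by
  obtain ⟨b, hb⟩ := (Submodule.mem_span_range_iff_exists_fun _).1 ha
  exact ⟨Finset.univ.sup fun i ↦ (b i).totalDegree, mem_boundedCombinations.2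
    ⟨b, fun i ↦ Finset.le_sup (f := fun i ↦ (b i).totalDegree) (Finset.mem_univ i), hb⟩⟩

lemma exists_smul_mem_boundedCombinations {h : MvPolynomial (Fin e) K} {W : Submodule K A}
    (hW : W.FG) (hg : ∀ w ∈ W, h • w ∈ Submodule.span (MvPolynomial (Fin e) K) (range g)) :
    ∃ M, ∀ w ∈ W, h • w ∈ boundedCombinations (e := e) (K := K) g M := by
  obtain ⟨S, rfl⟩ := hW
  choose T hT using fun w : S ↦ exists_mem_boundedCombinations (hg w (Submodule.subset_span w.2))
  let μ : A →ₗ[K] A := (LinearMap.lsmul (MvPolynomial (Fin e) K) A h).restrictScalars K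
  suffices Submodule.span K S ≤
      (boundedCombinations (e := e) (K := K) g (Finset.univ.sup T)).comap μ from ⟨_, this⟩
  exact Submodule.span_le.2 fun w hw ↦
    boundedCombinations_mono (Finset.le_sup (Finset.mem_univ (⟨w, hw⟩ : S))) (hT ⟨w, hw⟩)

end BoundedCombinations

section LinearNormalization

variable {e : ℕ} {K A : Type*} [Field K] [CommRing A] [Algebra K A]
  [Algebra (MvPolynomial (Fin e) K) A]

/-- The finite-dimensional space `Z` generates the `K`-algebra `A` and contains the coordinates of
a polynomial subalgebra such that every product of `G + 1` elements of `Z` is a combination of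
products of `G` elements with coefficients of degree at most one. -/
structure IsLinearNormalization (e : ℕ) {K A : Type*} [Field K] [CommRing A] [Algebra K A]
    [Algebra (MvPolynomial (Fin e) K) A] (Z : Submodule K A) (G : ℕ) : Prop where
  one_mem : 1 ∈ Z
  fg : Z.FG
  coord_mem : ∀ i : Fin e, algebraMap (MvPolynomial (Fin e) K) A (X i) ∈ Z
  pow_succ_le : Z ^ (G + 1) ≤
    Z ^ G * unitalSpan K fun i : Fin e ↦ algebraMap (MvPolynomial (Fin e) K) A (X i)
  exists_mem_pow : ∀ a, ∃ m, a ∈ Z ^ m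

namespace IsLinearNormalization

variable {Z : Submodule K A} {G : ℕ}

lemma finite_pow (H : IsLinearNormalization e Z G) (m : ℕ) : Module.Finite K ↥(Z ^ m) :=
  Module.Finite.iff_fg.2 (H.fg.pow m)

lemma pow_le_pow_mul (H : IsLinearNormalization e Z G) (q : ℕ) :
    Z ^ q ≤ Z ^ G *
      (unitalSpan K fun i : Fin e ↦ algebraMap (MvPolynomial (Fin e) K) A (X i)) ^ q :=
  (pow_le_pow_of_one_mem H.one_mem (by lia)).trans (pow_add_le_mul_pow H.pow_succ_le q)

variable [IsScalarTower K (MvPolynomial (Fin e) K) A]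

lemma aeval_algebraMap_X (p : MvPolynomial (Fin e) K) :
    aeval (fun i ↦ algebraMap (MvPolynomial (Fin e) K) A (X i)) p
      = algebraMap (MvPolynomial (Fin e) K) A p :=
  (DFunLike.congr_fun (aeval_unique (IsScalarTower.toAlgHom K (MvPolynomial (Fin e) K) A)) p).symm

lemma pow_induction (H : IsLinearNormalization e Z G) {q : ℕ} {P : A → Prop}
    (smul : ∀ p : MvPolynomial (Fin e) K, p.totalDegree ≤ q → ∀ u ∈ Z ^ G, P (p • u))
    (add : ∀ u v, P u → P v → P (u + v)) {a : A} (ha : a ∈ Z ^ q) : P a := by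
  have a_mem := H.pow_le_pow_mul q ha
  rw [unitalSpan_pow_eq] at a_mem
  refine Submodule.mul_induction_on a_mem (fun u hu v hv ↦ ?_) add
  obtain ⟨p, hp, rfl⟩ := hv
  rw [AlgHom.toLinearMap_apply, aeval_algebraMap_X, mul_comm, ← Algebra.smul_def]
  exact smul p ((mem_restrictTotalDegree _ _ _).1 hp) u hu

variable {s m : ℕ} {g : Fin s → A}

lemma boundedCombinations_le_pow (H : IsLinearNormalization e Z G) (hg : ∀ i, g i ∈ Z ^ m)
    (T : ℕ) : boundedCombinations (e := e) g T ≤ Z ^ (m + T) := by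
  intro a ha
  obtain ⟨b, hb, rfl⟩ := mem_boundedCombinations.1 ha
  refine Submodule.sum_mem _ fun i _ ↦ ?_
  rw [Algebra.smul_def, mul_comm, pow_add, ← aeval_algebraMap_X]
  exact Submodule.mul_mem_mul (hg i) (aeval_mem_pow H.one_mem H.coord_mem (hb i))

lemma mul_monomialCount_le_finrank (H : IsLinearNormalization e Z G)
    (hg : LinearIndependent (MvPolynomial (Fin e) K) g) (g_mem : ∀ i, g i ∈ Z ^ m) (T : ℕ) :
    s * monomialCount e T ≤ Module.finrank K ↥(Z ^ (m + T)) := by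
  have := H.finite_pow (m + T)
  rw [← finrank_boundedCombinations (K := K) T hg]
  exact Submodule.finrank_mono (H.boundedCombinations_le_pow g_mem T)

variable {h : MvPolynomial (Fin e) K}

lemma smul_mem_boundedCombinations_of_mem_pow (H : IsLinearNormalization e Z G)
    {M : ℕ}
    (hM : ∀ w ∈ Z ^ G, h • w ∈ boundedCombinations (e := e) (K := K) g M) {q : ℕ} {w : A}
    (hw : w ∈ Z ^ q) : h • w ∈ boundedCombinations (e := e) (K := K) g (q + M) := by
  refine H.pow_induction (P := fun a ↦ h • a ∈ _) (fun p hp u hu ↦ ?_) (fun u v hu hv ↦ ?_) hw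
  · rw [smul_comm]
    exact smul_mem_boundedCombinations hp (hM u hu)
  · rw [smul_add]
    exact Submodule.add_mem _ hu hv

lemma smul_mem_span (H : IsLinearNormalization e Z G)
    (hg : ∀ w ∈ Z ^ G, h • w ∈ Submodule.span (MvPolynomial (Fin e) K) (range g)) (a : A) :
    h • a ∈ Submodule.span (MvPolynomial (Fin e) K) (range g) := by
  obtain ⟨m, hm⟩ := H.exists_mem_pow a
  refine H.pow_induction (P := fun a ↦ h • a ∈ _) (fun p _ u hu ↦ ?_) (fun u v hu hv ↦ ?_) hm
  · rw [smul_comm]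
    exact Submodule.smul_mem _ _ (hg u hu)
  · rw [smul_add]
    exact Submodule.add_mem _ hu hv

variable [IsDomain A] [FaithfulSMul (MvPolynomial (Fin e) K) A]

lemma exists_finrank_pow_le (H : IsLinearNormalization e Z G) (h_ne_zero : h ≠ 0)
    (hg : ∀ w ∈ Z ^ G, h • w ∈ Submodule.span (MvPolynomial (Fin e) K) (range g)) :
    ∃ M, ∀ q, Module.finrank K ↥(Z ^ q) ≤ s * monomialCount e (q + M) := by
  obtain ⟨M, hM⟩ := exists_smul_mem_boundedCombinations (H.fg.pow G) hg
  refine ⟨M, fun q ↦ le_trans ?_ (finrank_boundedCombinations_le (K := K) g (q + M))⟩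
  let μ : A →ₗ[K] A := (LinearMap.lsmul (MvPolynomial (Fin e) K) A h).restrictScalars K
  have μ_injective : Function.Injective μ := fun a b hab ↦ by
    have hab : h • a = h • b := hab
    rw [Algebra.smul_def, Algebra.smul_def] at hab
    refine mul_left_cancel₀ ?_ hab
    simpa using h_ne_zero
  have map_le : (Z ^ q).map μ ≤ boundedCombinations (e := e) (K := K) g (q + M) := by
    rintro _ ⟨w, hw, rfl⟩
    exact H.smul_mem_boundedCombinations_of_mem_pow hM hw
  rw [LinearEquiv.finrank_eq (Submodule.equivMapOfInjective μ μ_injective _)]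
  exact Submodule.finrank_mono map_le

end IsLinearNormalization

end LinearNormalization

/-! ### The zero estimate and growth of Hilbert functions -/

section ZeroEstimate

lemma exists_eval_ne_zero {σ K : Type*} [Field K] [Infinite K] {p : MvPolynomial σ K}
    (hp : p ≠ 0) : ∃ c, eval c p ≠ 0 := by
  contrapose! hp
  exact MvPolynomial.funext fun c ↦ by rw [hp c, map_zero]

lemma smul_mem_ideal_smul {R A : Type*} [CommRing R] [CommRing A] [Algebra R A] {h : R}
    {N : Submodule R A} (h_smul : ∀ a : A, h • a ∈ N) {J : Ideal R} {a : A}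
    (ha : a ∈ J.map (algebraMap R A)) : h • a ∈ J • N := by
  replace ha : a ∈ J • (⊤ : Submodule R A) := by rwa [Ideal.smul_top_eq_map]
  induction ha using Submodule.smul_induction_on' with
  | smul r hr n _ =>
    rw [smul_comm]
    exact Submodule.smul_mem_smul hr (h_smul n)
  | add a _ b _ ha hb =>
    rw [smul_add]
    exact Submodule.add_mem _ ha hb

variable {e : ℕ} {K A : Type*} [Field K] [CommRing A] [Algebra K A]
  [Algebra (MvPolynomial (Fin e) K) A] [IsScalarTower K (MvPolynomial (Fin e) K) A]
  {s m : ℕ} {g : Fin s → A} {h : MvPolynomial (Fin e) K}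

/-- The Taylor coefficients up to order `m` at `c` of the coordinates of `h • w` with respect to
the linearly independent family `g`. -/
def taylorCoords (hg : LinearIndependent (MvPolynomial (Fin e) K) g) {W : Submodule K A}
    (h_smul : ∀ w ∈ W, h • w ∈ Submodule.span (MvPolynomial (Fin e) K) (range g))
    (c : Fin e → K) (m : ℕ) : W →ₗ[K] Fin s → ({t : Fin e →₀ ℕ // t.degree ≤ m} → K) :=
  (LinearMap.pi fun i ↦ taylorCoeffs c m ∘ₗ Finsupp.lapply i) ∘ₗ
    hg.repr.restrictScalars K ∘ₗ
    { toFun w := (⟨h • w, h_smul w w.2⟩ : Submodule.span (MvPolynomial (Fin e) K) (range g))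
      map_add' v w := by ext; simp
      map_smul' a w := Subtype.ext (smul_comm h a (w : A)) }

lemma smul_mem_map_of_taylorCoords_eq_zero (hg : LinearIndependent (MvPolynomial (Fin e) K) g)
    {W : Submodule K A}
    (h_smul : ∀ w ∈ W, h • w ∈ Submodule.span (MvPolynomial (Fin e) K) (range g))
    {c : Fin e → K} {f : W} (hf : taylorCoords hg h_smul c m f = 0) :
    h • (f : A) ∈ (vanishingOrderIdeal c (m + 1)).map (algebraMap (MvPolynomial (Fin e) K) A) := by
  have coord_mem (i : Fin s) :
      hg.repr ⟨h • f, h_smul f f.2⟩ i ∈ vanishingOrderIdeal c (m + 1) :=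
    mem_vanishingOrderIdeal_of_taylorCoeffs_eq_zero (congr_fun hf i)
  have sum_coords : _ = h • (f : A) := hg.linearCombination_repr ⟨h • f, h_smul f f.2⟩
  rw [Finsupp.linearCombination_apply, Finsupp.sum_fintype _ _ (by simp)] at sum_coords
  rw [← sum_coords]
  refine Ideal.sum_mem _ fun i _ ↦ ?_
  rw [Algebra.smul_def]
  exact Ideal.mul_mem_right _ _ (Ideal.mem_map_of_mem _ (coord_mem i))

lemma exists_smul_mem_map_vanishingOrderIdeal
    (hg : LinearIndependent (MvPolynomial (Fin e) K) g) {W : Submodule K A} [Module.Finite K W]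
    (h_smul : ∀ w ∈ W, h • w ∈ Submodule.span (MvPolynomial (Fin e) K) (range g))
    (c : Fin e → K) (h_lt : s * monomialCount e m < Module.finrank K W) :
    ∃ f ∈ W, f ≠ 0 ∧ h • f ∈
      (vanishingOrderIdeal c (m + 1)).map (algebraMap (MvPolynomial (Fin e) K) A) := by
  have finrank_codomain :
      Module.finrank K (Fin s → ({t : Fin e →₀ ℕ // t.degree ≤ m} → K)) =
        s * monomialCount e m := by
    rw [Module.finrank_pi_fintype]
    simp [finrank_taylorCoeffs_codomain]
  have ker_ne_bot : LinearMap.ker (taylorCoords hg h_smul c m) ≠ ⊥ :=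
    LinearMap.ker_ne_bot_of_finrank_lt (by rwa [finrank_codomain])
  obtain ⟨f, hf, f_ne_zero⟩ := (Submodule.ne_bot_iff _).1 ker_ne_bot
  exact ⟨f, f.2, by simpa using f_ne_zero, smul_mem_map_of_taylorCoords_eq_zero hg h_smul hf⟩

lemma eq_zero_of_smul_mem_map_vanishingOrderIdeal
    (hg : LinearIndependent (MvPolynomial (Fin e) K) g)
    (h_smul : ∀ a : A, h • a ∈ Submodule.span (MvPolynomial (Fin e) K) (range g))
    {c : Fin e → K} (hc : eval c h ≠ 0) {h₁ : MvPolynomial (Fin e) K} (hc₁ : eval c h₁ ≠ 0)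
    {T : ℕ} {a : A} (ha : a ∈ boundedCombinations (e := e) (K := K) g T)
    (h₁a : h₁ • a ∈
      (vanishingOrderIdeal c (T + 1)).map (algebraMap (MvPolynomial (Fin e) K) A)) : a = 0 := by
  obtain ⟨b, hb, rfl⟩ := mem_boundedCombinations.1 ha
  obtain ⟨v, hv, sum_eq⟩ := (Submodule.mem_ideal_smul_span_iff_exists_sum _ _ _).1
    (smul_mem_ideal_smul h_smul h₁a)
  rw [Finsupp.sum_fintype _ _ (by simp)] at sum_eq
  have coeff_eq (i : Fin s) : h * h₁ * b i = v i := by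
    refine congr_fun (hg.fintypeLinearCombination_injective (a₁ := fun i ↦ h * h₁ * b i) ?_) i
    simp only [Fintype.linearCombination_apply, sum_eq, Finset.smul_sum, mul_smul]
  have b_eq_zero (i : Fin s) : b i = 0 := by
    refine eq_zero_of_mem_vanishingOrderIdeal (c := c) ?_ (Nat.lt_succ_of_le (hb i))
    refine mem_vanishingOrderIdeal_of_mul_mem (h := h * h₁) ?_ (coeff_eq i ▸ hv i)
    rw [map_mul]
    exact mul_ne_zero hc hc₁
  simp [b_eq_zero]

namespace IsLinearNormalization

variable {Z : Submodule K A} {G D : ℕ} {g' : Fin D → A} {h' : MvPolynomial (Fin e) K}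

-- The coordinates of an element of the intersection have degree less than `(m + 1) * k`, but they
-- vanish to order `(m + 1) * k` at `c`.
lemma disjoint_map_mulLeft_boundedCombinations
    (hg' : LinearIndependent (MvPolynomial (Fin e) K) g')
    (h'_smul : ∀ a : A, h' • a ∈ Submodule.span (MvPolynomial (Fin e) K) (range g'))
    {c : Fin e → K} (hc' : eval c h' ≠ 0) (hc : eval c h ≠ 0) {f : A}
    (hf : h • f ∈
      (vanishingOrderIdeal c (m + 1)).map (algebraMap (MvPolynomial (Fin e) K) A))
    {k : ℕ} (hk : 0 < k) (W : Submodule K A) :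
    Disjoint (W.map (LinearMap.mulLeft K (f ^ k)))
      (boundedCombinations (e := e) (K := K) g' ((m + 1) * k - 1)) := by
  rw [Submodule.disjoint_def]
  rintro _ ⟨a, -, rfl⟩ h_mem
  refine eq_zero_of_smul_mem_map_vanishingOrderIdeal hg' h'_smul hc' (h₁ := h ^ k) (by
    rw [map_pow]
    exact pow_ne_zero k hc) h_mem ?_
  have one_le : 1 ≤ (m + 1) * k := Nat.mul_pos m.succ_pos hk
  have smul_eq : h ^ k • LinearMap.mulLeft K (f ^ k) a = (h • f) ^ k * a := by
    rw [LinearMap.mulLeft_apply, smul_pow, smul_mul_assoc]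
  rw [Nat.sub_add_cancel one_le, smul_eq]
  refine Ideal.mul_mem_right _ _ (Ideal.map_mono (vanishingOrderIdeal_pow_le (m + 1) k) ?_)
  rw [Ideal.map_pow]
  exact Ideal.pow_mem_pow hf k

variable [IsDomain A]

lemma finrank_add_le_of_disjoint (H : IsLinearNormalization e Z G)
    (hg' : LinearIndependent (MvPolynomial (Fin e) K) g') (g'_mem : ∀ i, g' i ∈ Z ^ G)
    {f : A} (hf : f ∈ Z ^ m) (f_ne_zero : f ≠ 0) {k : ℕ} (hk : 0 < k)
    (disjoint : Disjoint ((Z ^ (G + k)).map (LinearMap.mulLeft K (f ^ k)))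
      (boundedCombinations (e := e) (K := K) g' ((m + 1) * k - 1))) :
    D * monomialCount e k + D * monomialCount e ((m + 1) * k - 1) ≤
      Module.finrank K ↥(Z ^ (G + (m + 1) * k)) := by
  have := H.finite_pow (G + k)
  have := H.finite_pow (G + (m + 1) * k)
  have mul_injective : Function.Injective (LinearMap.mulLeft K (f ^ k)) :=
    mul_right_injective₀ (pow_ne_zero k f_ne_zero)
  have map_le : (Z ^ (G + k)).map (LinearMap.mulLeft K (f ^ k)) ≤ Z ^ (G + (m + 1) * k) := by
    rintro _ ⟨a, ha, rfl⟩
    rw [show G + (m + 1) * k = m * k + (G + k) by ring, pow_add, pow_mul]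
    exact Submodule.mul_mem_mul (Submodule.pow_mem_pow _ hf k) ha
  have combinations_le : boundedCombinations (e := e) (K := K) g' ((m + 1) * k - 1) ≤
      Z ^ (G + (m + 1) * k) :=
    (H.boundedCombinations_le_pow g'_mem _).trans (pow_le_pow_of_one_mem H.one_mem (by lia))
  have finrank_sum := Submodule.finrank_sup_add_finrank_inf_eq
    ((Z ^ (G + k)).map (LinearMap.mulLeft K (f ^ k)))
    (boundedCombinations (e := e) (K := K) g' ((m + 1) * k - 1))
  rw [disjoint.eq_bot, finrank_bot, add_zero, finrank_boundedCombinations _ hg',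
    ← LinearEquiv.finrank_eq (Submodule.equivMapOfInjective _ mul_injective _)] at finrank_sum
  calc _ ≤ Module.finrank K ↥(Z ^ (G + k)) + D * monomialCount e ((m + 1) * k - 1) := by
        gcongr
        exact H.mul_monomialCount_le_finrank hg' g'_mem k
    _ ≤ _ := finrank_sum.symm.le.trans (Submodule.finrank_mono (sup_le map_le combinations_le))

variable [FaithfulSMul (MvPolynomial (Fin e) K) A] [Infinite K]

theorem finrank_pow_le (H : IsLinearNormalization e Z G)
    (hg : LinearIndependent (MvPolynomial (Fin e) K) g) (h_ne_zero : h ≠ 0)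
    (h_smul : ∀ w ∈ Z ^ m, h • w ∈ Submodule.span (MvPolynomial (Fin e) K) (range g)) :
    Module.finrank K ↥(Z ^ m) ≤ s * monomialCount e m := by
  by_contra! h_lt
  obtain ⟨D, g', hg', g'_mem, h', h'_ne_zero, h'_smul⟩ :=
    exists_linearIndependent_smul_mem_span_of_fg (MvPolynomial (Fin e) K) (H.fg.pow G)
  obtain ⟨M, hM⟩ := H.exists_finrank_pow_le h'_ne_zero h'_smul
  obtain ⟨c, hc⟩ := exists_eval_ne_zero (mul_ne_zero h'_ne_zero h_ne_zero)
  rw [map_mul] at hc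
  have := H.finite_pow m
  obtain ⟨f, hf, f_ne_zero, h_smul_f⟩ :=
    exists_smul_mem_map_vanishingOrderIdeal hg h_smul c h_lt
  obtain ⟨k, hk, count_lt⟩ := exists_monomialCount_lt_add e m (G + M)
  have disjoint := disjoint_map_mulLeft_boundedCombinations hg' (H.smul_mem_span h'_smul)
    (left_ne_zero_of_mul hc) (right_ne_zero_of_mul hc) h_smul_f hk (Z ^ (G + k))
  have finrank_le := (H.finrank_add_le_of_disjoint hg' g'_mem hf f_ne_zero hk disjoint).trans
    (hM _)
  rw [← mul_add, add_comm G, add_assoc] at finrank_le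
  have D_pos : 0 < D := Nat.pos_of_ne_zero fun hD ↦ by
    subst hD
    simpa [Algebra.smul_def, h'_ne_zero] using H.smul_mem_span h'_smul 1
  exact count_lt.not_ge (Nat.le_of_mul_le_mul_left finrank_le D_pos)

theorem finrank_pow_mul_le (H : IsLinearNormalization e Z G) (m M : ℕ) :
    Module.finrank K ↥(Z ^ m) * monomialCount e M ≤
      Module.finrank K ↥(Z ^ (m + M)) * monomialCount e m := by
  obtain ⟨s, g, hg, g_mem, h, h_ne_zero, h_smul⟩ :=
    exists_linearIndependent_smul_mem_span_of_fg (MvPolynomial (Fin e) K) (H.fg.pow m)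
  calc _ ≤ s * monomialCount e m * monomialCount e M := by
        gcongr
        exact H.finrank_pow_le hg h_ne_zero h_smul
    _ = s * monomialCount e M * monomialCount e m := mul_right_comm _ _ _
    _ ≤ _ := by
        gcongr
        exact H.mul_monomialCount_le_finrank hg g_mem M

end IsLinearNormalization

lemma IsLinearNormalization.monomialCount_le_finrank_pow [IsDomain A]
    [FaithfulSMul (MvPolynomial (Fin e) K) A] {Z : Submodule K A} {G : ℕ}
    (H : IsLinearNormalization e Z G) (M : ℕ) :
    monomialCount e M ≤ Module.finrank K ↥(Z ^ M) := by
  have independent : LinearIndependent (MvPolynomial (Fin e) K) fun _ : Fin 1 ↦ (1 : A) :=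
    linearIndependent_unique_iff.2 one_ne_zero
  have one_mem (_ : Fin 1) : (1 : A) ∈ Z ^ 0 := by simp
  have := H.mul_monomialCount_le_finrank independent one_mem M
  rwa [one_mul, zero_add] at this

end ZeroEstimate

/-! ### Hilbert functions and dimension of quotients of polynomial rings -/

section RingKrullDim

variable {R S : Type*} [CommRing R] [CommRing S] [Algebra R S] [Algebra.IsIntegral R S]

lemma ringKrullDim_le_of_isIntegral : ringKrullDim S ≤ ringKrullDim R :=
  Order.krullDim_le_of_strictMono (PrimeSpectrum.comap (algebraMap R S))
    fun _ _ h ↦ Ideal.IsIntegral.comap_lt_comap h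

lemma ringKrullDim_le_of_isIntegral_of_faithfulSMul [FaithfulSMul R S] :
    ringKrullDim R ≤ ringKrullDim S := by
  refine iSup_le fun l ↦ ?_
  obtain ⟨P, _, _, comap_eq⟩ := Ideal.exists_ideal_over_prime_of_isIntegral (S := S)
    l.head.asIdeal ⊥ fun r hr ↦ by
      rw [Ideal.mem_comap, Ideal.mem_bot, FaithfulSMul.algebraMap_eq_zero_iff] at hr
      exact hr ▸ zero_mem _
  have : P.LiesOver l.head.asIdeal := ⟨comap_eq.symm⟩
  obtain ⟨L, length_eq, -⟩ := Ideal.exists_ltSeries_of_hasGoingUp l P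
  exact le_iSup_of_le L (by rw [length_eq])

lemma ringKrullDim_eq_of_isIntegral [FaithfulSMul R S] : ringKrullDim S = ringKrullDim R :=
  ringKrullDim_le_of_isIntegral.antisymm ringKrullDim_le_of_isIntegral_of_faithfulSMul

end RingKrullDim

section AlgebraOfTuple

variable {e : ℕ} {ι K A : Type*} [Field K] [CommRing A] [Algebra K A]

/-- The algebra structure over the polynomial ring given by evaluation at the tuple `y`. -/
@[reducible]
def algebraOfTuple (y : ι → A) : Algebra (MvPolynomial ι K) A :=
  (aeval y).toRingHom.toAlgebra

lemma isScalarTower_algebraOfTuple (y : ι → A) :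
    letI := algebraOfTuple (K := K) y
    IsScalarTower K (MvPolynomial ι K) A :=
  letI := algebraOfTuple (K := K) y
  .of_algebraMap_eq fun r ↦ ((aeval y).commutes r).symm

lemma faithfulSMul_algebraOfTuple {y : ι → A} (hy : AlgebraicIndependent K y) :
    letI := algebraOfTuple (K := K) y
    FaithfulSMul (MvPolynomial ι K) A :=
  letI := algebraOfTuple (K := K) y
  (faithfulSMul_iff_algebraMap_injective _ _).2 hy

lemma isLinearNormalization_algebraOfTuple [Finite ι] {x : ι → A}
    (hx : Function.Surjective (aeval x : MvPolynomial ι K → A)) {y : Fin e → A}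
    (y_mem : ∀ i, y i ∈ Submodule.span K (range x)) {G : ℕ}
    (hG : unitalSpan K x ^ (G + 1) ≤ unitalSpan K x ^ G * unitalSpan K y) :
    letI := algebraOfTuple (K := K) y
    IsLinearNormalization e (unitalSpan K x) G := by
  let := algebraOfTuple (K := K) y
  have algebraMap_X (i : Fin e) : algebraMap (MvPolynomial (Fin e) K) A (X i) = y i :=
    aeval_X y i
  refine ⟨one_mem_unitalSpan x, Submodule.fg_span ((finite_range x).insert 1), fun i ↦ ?_,
    by simpa only [algebraMap_X] using hG, fun a ↦ ?_⟩
  · rw [algebraMap_X]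
    exact span_range_le_unitalSpan x (y_mem i)
  · obtain ⟨p, rfl⟩ := hx a
    exact ⟨p.totalDegree,
      aeval_mem_pow (one_mem_unitalSpan x) (apply_mem_unitalSpan x) le_rfl⟩

end AlgebraOfTuple

lemma IsLinearNormalization.finite {e : ℕ} {K A : Type*} [Field K] [CommRing A] [Algebra K A]
    [Algebra (MvPolynomial (Fin e) K) A] [IsScalarTower K (MvPolynomial (Fin e) K) A]
    {Z : Submodule K A} {G : ℕ} (H : IsLinearNormalization e Z G) :
    Module.Finite (MvPolynomial (Fin e) K) A := by
  obtain ⟨S, hS⟩ := H.fg.pow G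
  refine ⟨S, eq_top_iff.2 fun a _ ↦ ?_⟩
  obtain ⟨m, hm⟩ := H.exists_mem_pow a
  refine H.pow_induction (P := (· ∈ Submodule.span _ _)) (fun p _ u hu ↦ ?_)
    (fun u v ↦ Submodule.add_mem _) hm
  rw [← hS] at hu
  exact Submodule.smul_mem _ _ (Submodule.span_le_restrictScalars K _ _ hu)

lemma ringKrullDim_eq_of_finite {e : ℕ} {K A : Type*} [Field K] [CommRing A]
    [Algebra (MvPolynomial (Fin e) K) A] [FaithfulSMul (MvPolynomial (Fin e) K) A]
    [Module.Finite (MvPolynomial (Fin e) K) A] : ringKrullDim A = e := by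
  rw [ringKrullDim_eq_of_isIntegral (R := MvPolynomial (Fin e) K),
    MvPolynomial.ringKrullDim_of_isNoetherianRing, ringKrullDim_eq_zero_of_field]
  simp

section Quotient

variable {n : ℕ} {K : Type*} [Field K]

/-- The classes of the variables in `K[x₁, …, xₙ] / P`. -/
def quotientCoord (P : Ideal (MvPolynomial (Fin n) K)) (i : Fin n) : MvPolynomial (Fin n) K ⧸ P :=
  Ideal.Quotient.mk P (X i)

/-- The Krull dimension of `K[x₁, …, xₙ] / P` as a natural number; it is meaningful for
proper ideals `P`. -/
def quotientDim (P : Ideal (MvPolynomial (Fin n) K)) : ℕ :=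
  ((ringKrullDim (MvPolynomial (Fin n) K ⧸ P)).unbotD 0).toNat

/-- The affine Hilbert function of `P`: the dimension of the space of polynomials of degree at most
`m` modulo `P`. -/
def hilbertFunction (P : Ideal (MvPolynomial (Fin n) K)) (m : ℕ) : ℕ :=
  Module.finrank K ↥(unitalSpan K (quotientCoord P) ^ m)

variable {P Q : Ideal (MvPolynomial (Fin n) K)}

lemma aeval_quotientCoord (p : MvPolynomial (Fin n) K) :
    aeval (quotientCoord P) p = Ideal.Quotient.mk P p :=
  (DFunLike.congr_fun (aeval_unique (Ideal.Quotient.mkₐ K P)) p).symm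

lemma aeval_quotientCoord_surjective :
    Function.Surjective (aeval (quotientCoord P) : MvPolynomial (Fin n) K → _) := fun a ↦ by
  obtain ⟨p, rfl⟩ := Ideal.Quotient.mk_surjective a
  exact ⟨p, aeval_quotientCoord p⟩

lemma hilbertFunction_mono {m M : ℕ} (h : m ≤ M) : hilbertFunction P m ≤ hilbertFunction P M := by
  have : Module.Finite K ↥(unitalSpan K (quotientCoord P) ^ M) :=
    Module.Finite.iff_fg.2 ((Submodule.fg_span ((finite_range _).insert 1)).pow M)
  exact Submodule.finrank_mono (pow_le_pow_of_one_mem (one_mem_unitalSpan _) h)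

lemma hilbertFunction_eq_finrank_quotient (m : ℕ) :
    hilbertFunction P m = Module.finrank K (restrictTotalDegree (Fin n) K m ⧸
      (P.restrictScalars K).comap (restrictTotalDegree (Fin n) K m).subtype) := by
  let φ := (aeval (quotientCoord P)).toLinearMap.domRestrict (restrictTotalDegree (Fin n) K m)
  have ker_eq : φ.ker = (P.restrictScalars K).comap (restrictTotalDegree (Fin n) K m).subtype := by
    ext p
    simp [φ, aeval_quotientCoord, Ideal.Quotient.eq_zero_iff_mem]
  rw [hilbertFunction, unitalSpan_pow_eq, ← ker_eq, φ.quotKerEquivRange.finrank_eq,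
    LinearMap.range_domRestrict]

lemma hilbertFunction_eq_of_le (h : P ≤ Q) {m : ℕ}
    (hm : ∀ f ∈ Q, f.totalDegree ≤ m → f ∈ P) : hilbertFunction P m = hilbertFunction Q m := by
  have comap_eq : (P.restrictScalars K).comap (restrictTotalDegree (Fin n) K m).subtype =
      (Q.restrictScalars K).comap (restrictTotalDegree (Fin n) K m).subtype := by
    ext ⟨f, hf⟩
    exact ⟨fun hP ↦ h hP, fun hQ ↦ hm f hQ ((mem_restrictTotalDegree _ _ _).1 hf)⟩
  rw [hilbertFunction_eq_finrank_quotient, hilbertFunction_eq_finrank_quotient, comap_eq]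

variable [Infinite K] [P.IsPrime] [Q.IsPrime]

variable (P) in
lemma exists_quotient_normalization :
    ∃ y : Fin (quotientDim P) → MvPolynomial (Fin n) K ⧸ P,
      ringKrullDim (MvPolynomial (Fin n) K ⧸ P) = quotientDim P ∧
      (∀ i, y i ∈ Submodule.span K (range (quotientCoord P))) ∧ AlgebraicIndependent K y ∧
      ∃ G, letI := algebraOfTuple (K := K) y
        IsLinearNormalization (quotientDim P) (unitalSpan K (quotientCoord P)) G := by
  obtain ⟨e, y, y_mem, independent, G, hG⟩ :=
    exists_linear_noether_normalization (K := K) (quotientCoord P)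
  let := algebraOfTuple (K := K) y
  have := isScalarTower_algebraOfTuple (K := K) y
  have := faithfulSMul_algebraOfTuple independent
  have normalization :=
    isLinearNormalization_algebraOfTuple aeval_quotientCoord_surjective y_mem hG
  have := normalization.finite
  have dim_eq : ringKrullDim (MvPolynomial (Fin n) K ⧸ P) = e := ringKrullDim_eq_of_finite (K := K)
  obtain rfl : quotientDim P = e := by rw [quotientDim, dim_eq]; rfl
  exact ⟨y, dim_eq, y_mem, independent, G, normalization⟩

variable (P) in
lemma coe_quotientDim : ringKrullDim (MvPolynomial (Fin n) K ⧸ P) = quotientDim P :=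
  (exists_quotient_normalization P).choose_spec.1

variable (P) in
theorem hilbertFunction_mul_le (m M : ℕ) :
    hilbertFunction P m * monomialCount (quotientDim P) M ≤
      hilbertFunction P (m + M) * monomialCount (quotientDim P) m := by
  obtain ⟨y, -, -, independent, G, H⟩ := exists_quotient_normalization P
  let := algebraOfTuple (K := K) y
  have := isScalarTower_algebraOfTuple (K := K) y
  have := faithfulSMul_algebraOfTuple independent
  exact H.finrank_pow_mul_le m M

variable (P) in
lemma monomialCount_le_hilbertFunction (M : ℕ) :
    monomialCount (quotientDim P) M ≤ hilbertFunction P M := by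
  obtain ⟨y, -, -, independent, G, H⟩ := exists_quotient_normalization P
  let := algebraOfTuple (K := K) y
  have := isScalarTower_algebraOfTuple (K := K) y
  have := faithfulSMul_algebraOfTuple independent
  exact H.monomialCount_le_finrank_pow M

lemma quotientDim_lt (h : P < Q) : quotientDim Q < quotientDim P := by
  obtain ⟨q, q_mem, q_notMem⟩ := SetLike.exists_of_lt h
  have q_ne_zero : Ideal.Quotient.mk P q ≠ 0 := by rwa [Ne, Ideal.Quotient.eq_zero_iff_mem]
  have succ_le := ringKrullDim_succ_le_of_surjective (Ideal.Quotient.factor h.le)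
    (Ideal.Quotient.factor_surjective h.le) (mem_nonZeroDivisors_of_ne_zero q_ne_zero)
    (by rwa [Ideal.Quotient.factor_mk, Ideal.Quotient.eq_zero_iff_mem])
  rw [coe_quotientDim, coe_quotientDim] at succ_le
  exact_mod_cast succ_le

variable (P) in
lemma quotientDim_le : quotientDim P ≤ n := by
  have le := ringKrullDim_quotient_le P
  rw [coe_quotientDim, MvPolynomial.ringKrullDim_of_isNoetherianRing,
    ringKrullDim_eq_zero_of_field, zero_add, Nat.card_fin] at le
  exact_mod_cast le

end Quotient

/-! ### Varieties and prime ideals -/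

section Varieties

variable {n : ℕ} {V W : Set (Fin n → ℂ)}

lemma zeroLocus_vanishingIdeal (hV : IsAlgebraicSet n V) :
    zeroLocus n (vanishingIdeal n V : Set (MvPolynomial (Fin n) ℂ)) = V := by
  obtain ⟨S, rfl⟩ := hV
  exact Subset.antisymm (fun x hx f hf ↦ hx f fun y hy ↦ hy f hf) fun x hx f hf ↦ hf x hx

lemma zeroLocus_anti {S T : Set (MvPolynomial (Fin n) ℂ)} (h : S ⊆ T) :
    zeroLocus n T ⊆ zeroLocus n S :=
  fun _ hx f hf ↦ hx f (h hf)

lemma vanishingIdeal_anti (h : V ⊆ W) : vanishingIdeal n W ≤ vanishingIdeal n V :=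
  fun _ hf x hx ↦ hf x (h hx)

lemma vanishingIdeal_zeroLocus (P : Ideal (MvPolynomial (Fin n) ℂ)) [P.IsPrime] :
    vanishingIdeal n (zeroLocus n (P : Set (MvPolynomial (Fin n) ℂ))) = P :=
  MvPolynomial.IsPrime.vanishingIdeal_zeroLocus (K := ℂ) P

lemma zeroLocus_ssubset {P Q : Ideal (MvPolynomial (Fin n) ℂ)} [P.IsPrime] [Q.IsPrime]
    (h : P < Q) : zeroLocus n (Q : Set (MvPolynomial (Fin n) ℂ)) ⊂ zeroLocus n P :=
  (zeroLocus_anti h.le).ssubset_of_ne fun eq ↦ h.ne <| by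
    rw [← vanishingIdeal_zeroLocus P, ← vanishingIdeal_zeroLocus Q, eq]

lemma vanishingIdeal_lt (hV : IsAlgebraicSet n V) (hW : IsAlgebraicSet n W) (h : V ⊂ W) :
    vanishingIdeal n W < vanishingIdeal n V :=
  (vanishingIdeal_anti h.subset).lt_of_ne fun eq ↦ h.ne <| by
    rw [← zeroLocus_vanishingIdeal hV, ← zeroLocus_vanishingIdeal hW, eq]

lemma IsIrredVariety.isPrime_vanishingIdeal (hV : IsIrredVariety n V) :
    (vanishingIdeal n V).IsPrime := by
  obtain ⟨-, ⟨x, hx⟩, subset_or⟩ := hV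
  refine ⟨(Ideal.ne_top_iff_one _).2 fun one_mem ↦ one_ne_zero (α := ℂ) ?_, fun {f g} hfg ↦ ?_⟩
  · simpa using one_mem x hx
  · have cover : V ⊆ zeroLocus n {f} ∪ zeroLocus n {g} := fun y hy ↦ by
      simpa [zeroLocus] using hfg y hy
    exact (subset_or _ _ ⟨_, rfl⟩ ⟨_, rfl⟩ cover).imp (fun h y hy ↦ h hy f rfl)
      fun h y hy ↦ h hy g rfl

lemma isIrredVariety_zeroLocus (P : Ideal (MvPolynomial (Fin n) ℂ)) [hP : P.IsPrime] :
    IsIrredVariety n (zeroLocus n (P : Set (MvPolynomial (Fin n) ℂ))) := by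
  refine ⟨⟨_, rfl⟩, nonempty_iff_ne_empty.2 fun empty ↦ hP.ne_top ?_, ?_⟩
  · rw [← vanishingIdeal_zeroLocus P, empty]
    exact eq_top_iff.2 fun f _ x hx ↦ hx.elim
  · rintro _ _ ⟨S, rfl⟩ ⟨T, rfl⟩ cover
    by_contra! ⟨not_subset_S, not_subset_T⟩
    obtain ⟨x, hx, hxS⟩ := not_subset.1 not_subset_S
    obtain ⟨y, hy, hyT⟩ := not_subset.1 not_subset_T
    simp only [zeroLocus, mem_ofPred_eq, not_forall] at hxS hyT
    obtain ⟨f, hf, hfx⟩ := hxS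
    obtain ⟨g, hg, hgy⟩ := hyT
    have mul_mem : f * g ∈ vanishingIdeal n (zeroLocus n (P : Set (MvPolynomial (Fin n) ℂ))) := by
      intro z hz
      rw [map_mul, mul_eq_zero]
      exact (cover hz).imp (fun h ↦ h f hf) fun h ↦ h g hg
    rw [vanishingIdeal_zeroLocus] at mul_mem
    exact (hP.mem_or_mem mul_mem).elim (fun h ↦ hfx (hx f h)) fun h ↦ hgy (hy g h)

lemma hasChain_iff (hV : IsIrredVariety n V) {d : ℕ} :
    HasChain n V d ↔ d ≤ ringKrullDim (MvPolynomial (Fin n) ℂ ⧸ vanishingIdeal n V) := by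
  rw [ringKrullDim_quotient, Order.le_krullDim_iff]
  constructor
  · rintro ⟨W, irreducible, W_lt, W_subset⟩
    have W_strictMono : StrictMono W := fun i j ↦ W_lt i j
    refine ⟨LTSeries.mk d (fun i ↦ ⟨⟨vanishingIdeal n (W i.rev),
      (irreducible _).isPrime_vanishingIdeal⟩, vanishingIdeal_anti ?_⟩) fun i j hij ↦ ?_, rfl⟩
    · exact (W_strictMono.monotone (Fin.le_last _)).trans W_subset
    · exact vanishingIdeal_lt (irreducible _).1 (irreducible _).1 (W_lt _ _ (Fin.rev_lt_rev.2 hij))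
  · rintro ⟨l, rfl⟩
    refine ⟨fun i ↦ zeroLocus n ((l i.rev).1.asIdeal : Set (MvPolynomial (Fin n) ℂ)),
      fun i ↦ isIrredVariety_zeroLocus _,
      fun i j hij ↦ zeroLocus_ssubset (l.strictMono (Fin.rev_lt_rev.2 hij)), ?_⟩
    exact (zeroLocus_anti (l _).2).trans (zeroLocus_vanishingIdeal hV.1).subset

theorem dim_eq_quotientDim (hV : IsIrredVariety n V) :
    dim n V = quotientDim (vanishingIdeal n V) := by
  have := hV.isPrime_vanishingIdeal
  simp only [dim, hasChain_iff hV, coe_quotientDim, Nat.cast_le]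
  exact csSup_Iic

end Varieties

/-! ### Fibres of finite maps to affine space -/

section Separable

variable {B : Type*} [CommRing B]

lemma separable_map_of_resultant_ne_zero {K : Type*} [Field K] {f : Polynomial B} (hf : f.Monic)
    (φ : B →+* K) (hφ : φ (f.resultant f.derivative) ≠ 0) : (f.map φ).Separable := by
  obtain natDegree_eq_zero | natDegree_ne_zero := eq_or_ne f.natDegree 0
  · rw [Polynomial.eq_one_of_monic_natDegree_zero hf natDegree_eq_zero, Polynomial.map_one]
    exact Polynomial.separable_one
  obtain ⟨p, q, -, -, hpq⟩ := Polynomial.exists_mul_add_mul_eq_C_resultant f f.derivative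
    le_rfl le_rfl (.inl natDegree_ne_zero)
  have hpq_map := congrArg
    (fun p ↦ Polynomial.C (φ (f.resultant f.derivative))⁻¹ * p.map φ) hpq
  beta_reduce at hpq_map
  rw [Polynomial.map_C, ← Polynomial.C_mul, inv_mul_cancel₀ hφ, Polynomial.C_1] at hpq_map
  refine ⟨Polynomial.C (φ (f.resultant f.derivative))⁻¹ * p.map φ,
    Polynomial.C (φ (f.resultant f.derivative))⁻¹ * q.map φ, ?_⟩
  rw [← hpq_map, Polynomial.derivative_map, Polynomial.map_add, Polynomial.map_mul,
    Polynomial.map_mul]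
  ring

lemma resultant_derivative_ne_zero {F : Type*} [Field F] [Algebra B F] [FaithfulSMul B F]
    {f : Polynomial B} (hf : (f.map (algebraMap B F)).Separable) :
    f.resultant f.derivative ≠ 0 := fun h ↦ by
  have injective := FaithfulSMul.algebraMap_injective B F
  refine Polynomial.resultant_ne_zero _ _ hf ?_
  rw [Polynomial.derivative_map, Polynomial.natDegree_map_eq_of_injective injective,
    Polynomial.natDegree_map_eq_of_injective injective, Polynomial.resultant_map_map, h, map_zero]

end Separable

section PrimitiveElement

open IntermediateField

variable {B A : Type*} [CommRing B] [CommRing A] [IsDomain A] [Algebra B A]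

lemma exists_adjoin_algebraMap_eq_top [Algebra.IsAlgebraic B A]
    (F L : Type*) [Field F] [Field L] [Algebra B F] [IsFractionRing B F] [Algebra A L]
    [IsFractionRing A L] [Algebra F L] [Algebra B L] [IsScalarTower B F L] [IsScalarTower B A L]
    [Module.Finite F L] [Algebra.IsSeparable F L] : ∃ z : A, F⟮algebraMap A L z⟯ = ⊤ := by
  obtain ⟨α, adjoin_eq⟩ := Field.exists_primitive_element F L
  obtain ⟨a, b, hb, rfl⟩ := IsFractionRing.div_surjective (A := A) α
  obtain ⟨r, r_ne_zero, c, hc⟩ := (Algebra.IsAlgebraic.isAlgebraic (R := B) b).exists_nonzero_dvd hb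
  have b_ne_zero : algebraMap A L b ≠ 0 :=
    IsFractionRing.to_map_ne_zero_of_mem_nonZeroDivisors hb
  have r_map_ne_zero : algebraMap B F r ≠ 0 := by
    rwa [Ne, FaithfulSMul.algebraMap_eq_zero_iff]
  have map_r : algebraMap F L (algebraMap B F r) = algebraMap A L b * algebraMap A L c := by
    rw [← IsScalarTower.algebraMap_apply B F L, IsScalarTower.algebraMap_apply B A L, hc, map_mul]
  have div_eq : algebraMap A L a / algebraMap A L b =
      algebraMap F L (algebraMap B F r)⁻¹ * algebraMap A L (a * c) := by
    rw [map_inv₀, div_eq_iff b_ne_zero, mul_assoc, eq_inv_mul_iff_mul_eq₀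
      (by rwa [Ne, map_eq_zero]), map_r, map_mul]
    ring
  refine ⟨a * c, ?_⟩
  rw [eq_top_iff, ← adjoin_eq, adjoin_simple_le_iff, div_eq]
  exact mul_mem (IntermediateField.algebraMap_mem _ _) (mem_adjoin_simple_self F _)

variable [IsDomain B] [IsIntegrallyClosed B] [CharZero B] [Module.Finite B A] [FaithfulSMul B A]

lemma exists_le_natDegree_minpoly_and_resultant_ne_zero {D : ℕ} {g : Fin D → A}
    (hg : LinearIndependent B g) : ∃ z : A, D ≤ (minpoly B z).natDegree ∧
      (minpoly B z).resultant (minpoly B z).derivative ≠ 0 := by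
  let F := FractionRing B
  let L := FractionRing A
  let : Algebra F L := FractionRing.liftAlgebra B L
  obtain ⟨z, adjoin_eq⟩ := exists_adjoin_algebraMap_eq_top (B := B) (A := A) F L
  have hz : IsIntegral B z := Algebra.IsIntegral.isIntegral z
  have map_minpoly := (minpoly.isIntegrallyClosed_eq_field_fractions F L hz).symm
  refine ⟨z, ?_, resultant_derivative_ne_zero (F := F) ?_⟩
  · have natDegree_eq : (minpoly B z).natDegree = Module.finrank F L := by
      rw [← (minpoly.monic hz).natDegree_map (algebraMap B F), map_minpoly,
        ← adjoin.finrank (Algebra.IsIntegral.isIntegral _), adjoin_eq, finrank_top']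
    have independent : LinearIndependent B (fun i ↦ algebraMap A L (g i)) :=
      hg.map' (IsScalarTower.toAlgHom B A L).toLinearMap
        (LinearMap.ker_eq_bot.2 (FaithfulSMul.algebraMap_injective A L))
    simpa [natDegree_eq] using
      ((LinearIndependent.iff_fractionRing B F).1 independent).fintype_card_le_finrank
  · rw [map_minpoly]
    exact Algebra.IsSeparable.isSeparable F _

end PrimitiveElement

lemma exists_algHom_of_isMaximal {K A : Type*} [Field K] [IsAlgClosed K] [CommRing A] [Algebra K A]
    [Algebra.FiniteType K A] (Q : Ideal A) [Q.IsMaximal] :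
    ∃ φ : A →ₐ[K] K, ∀ a ∈ Q, φ a = 0 := by
  let := Ideal.Quotient.field Q
  have := finite_of_finite_type_of_isJacobsonRing K (A ⧸ Q)
  let residue := AlgEquiv.ofBijective (Algebra.ofId K (A ⧸ Q))
    IsAlgClosed.algebraMap_bijective_of_isIntegral
  refine ⟨residue.symm.toAlgHom.comp (Ideal.Quotient.mkₐ K Q), fun a ha ↦ ?_⟩
  simp [Ideal.Quotient.eq_zero_iff_mem.2 ha]

section AlgHomFibre

variable {K B A : Type*} [Field K] [CommRing B] [Algebra K B] [CommRing A] [Algebra K A]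
  [Algebra B A]

variable (A) in
/-- The `K`-points of `A` lying over the `K`-point `ψ` of `B`. -/
def algHomFibre (ψ : B →ₐ[K] K) : Set (A →ₐ[K] K) :=
  {φ | ∀ b, φ (algebraMap B A b) = ψ b}

lemma isRoot_map_of_mem_algHomFibre {ψ : B →ₐ[K] K} {φ : A →ₐ[K] K} (hφ : φ ∈ algHomFibre A ψ)
    {p : Polynomial B} {a : A} (hp : Polynomial.aeval a p = 0) :
    (p.map (ψ : B →+* K)).IsRoot (φ a) := by
  have comp_eq : (φ : A →+* K).comp (algebraMap B A) = ψ := RingHom.ext hφ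
  rw [Polynomial.IsRoot.def, Polynomial.eval_map, ← comp_eq]
  exact (Polynomial.hom_eval₂ _ _ _ _).symm.trans ((congrArg φ hp).trans (map_zero φ))

lemma exists_finset_apply_mem {ι : Type*} [Finite ι] {y : ι → A} (hy : ∀ i, IsIntegral B (y i)) :
    ∃ N : ℕ, ∀ ψ : B →ₐ[K] K, ∃ F : Finset (ι → K), F.card ≤ N ∧
      ∀ φ ∈ algHomFibre A ψ, (fun i ↦ φ (y i)) ∈ F := by
  classical
  have := Fintype.ofFinite ι
  refine ⟨∏ i, (minpoly B (y i)).natDegree, fun ψ ↦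
    ⟨Fintype.piFinset fun i ↦ ((minpoly B (y i)).map (ψ : B →+* K)).roots.toFinset, ?_, ?_⟩⟩
  · rw [Fintype.card_piFinset]
    exact Finset.prod_le_prod' fun i _ ↦ (Multiset.toFinset_card_le _).trans
      ((Polynomial.card_roots' _).trans Polynomial.natDegree_map_le)
  · intro φ hφ
    rw [Fintype.mem_piFinset]
    intro i
    rw [Multiset.mem_toFinset, Polynomial.mem_roots ((minpoly.monic (hy i)).map _).ne_zero]
    exact isRoot_map_of_mem_algHomFibre hφ (minpoly.aeval B (y i))

lemma algHomFibre_aeval {ι : Type*} [Algebra (MvPolynomial ι K) A]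
    [IsScalarTower K (MvPolynomial ι K) A] (c : ι → K) :
    algHomFibre A (aeval (R := K) c) =
      {φ : A →ₐ[K] K | ∀ i, φ (algebraMap (MvPolynomial ι K) A (X i)) = c i} := by
  refine Set.ext fun φ ↦ ⟨fun hφ i ↦ (hφ (X i)).trans (aeval_X c i), fun hφ p ↦ ?_⟩
  have comp_eq : (φ.comp (IsScalarTower.toAlgHom K (MvPolynomial ι K) A)) = aeval c :=
    algHom_ext fun i ↦ (hφ i).trans (aeval_X c i).symm
  exact DFunLike.congr_fun comp_eq p

lemma finite_algHomFibre [Algebra.IsIntegral B A] [Algebra.FiniteType K A] (ψ : B →ₐ[K] K) :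
    (algHomFibre A ψ).Finite := by
  obtain ⟨s, adjoin_eq_top⟩ := Algebra.FiniteType.out (R := K) (A := A)
  obtain ⟨N, hN⟩ := exists_finset_apply_mem (K := K) (B := B) (y := ((↑) : s → A))
    fun a ↦ Algebra.IsIntegral.isIntegral (a : A)
  obtain ⟨F, -, apply_mem⟩ := hN ψ
  refine Finite.of_finite_image (f := fun φ (a : s) ↦ φ a)
    (F.finite_toSet.subset ?_) fun φ _ φ' _ eq_on ↦
      AlgHom.ext_of_adjoin_eq_top adjoin_eq_top fun a ha ↦ congrFun eq_on ⟨a, ha⟩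
  rintro _ ⟨φ, hφ, rfl⟩
  exact apply_mem φ hφ

end AlgHomFibre

section FibrePoints

variable {K B A : Type*} [Field K] [IsAlgClosed K] [CommRing B] [IsDomain B]
  [IsIntegrallyClosed B] [Algebra K B] [CommRing A] [IsDomain A] [Algebra K A] [Algebra B A]
  [IsScalarTower K B A] [FaithfulSMul B A]

lemma exists_algHom_of_isRoot_map_minpoly [Algebra.IsIntegral B A] [Algebra.FiniteType K A]
    (z : A) (ψ : B →ₐ[K] K) {ρ : K} (hρ : ((minpoly B z).map (ψ : B →+* K)).IsRoot ρ) :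
    ∃ φ ∈ algHomFibre A ψ, φ z = ρ := by
  let evalPoint : Polynomial B →ₐ[K] K := Polynomial.eval₂AlgHom ψ ρ fun _ ↦ mul_comm _ _
  have := RingHom.ker_isMaximal_of_surjective evalPoint
    fun t ↦ ⟨algebraMap K _ t, evalPoint.commutes t⟩
  let aeval_z : Polynomial B →ₐ[K] A := (Polynomial.aeval z).restrictScalars K
  let : Algebra (Polynomial B) A := aeval_z.toRingHom.toAlgebra
  have : IsScalarTower B (Polynomial B) A :=
    .of_algebraMap_eq fun r ↦ ((Polynomial.aeval (R := B) z).commutes r).symm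
  have : Algebra.IsIntegral (Polynomial B) A := Algebra.IsIntegral.tower_top B
  obtain ⟨Q, _, comap_eq⟩ := Ideal.exists_ideal_over_maximal_of_isIntegral (S := A)
    (RingHom.ker evalPoint) fun t ht ↦ by
      obtain ⟨s, rfl⟩ := minpoly.isIntegrallyClosed_dvd (Algebra.IsIntegral.isIntegral z) ht
      rw [Polynomial.IsRoot.def, Polynomial.eval_map] at hρ
      rw [RingHom.mem_ker, map_mul, show evalPoint (minpoly B z) = 0 from hρ, zero_mul]
  obtain ⟨φ, hφ⟩ := exists_algHom_of_isMaximal (K := K) Q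
  have apply_eq (p : Polynomial B) : φ (aeval_z p) = evalPoint p := by
    have sub_mem : p - algebraMap K _ (evalPoint p) ∈ Q.comap (algebraMap (Polynomial B) A) := by
      rw [comap_eq, RingHom.mem_ker, map_sub, evalPoint.commutes, sub_eq_zero]
      rfl
    have apply_eq_zero : φ (aeval_z (p - algebraMap K _ (evalPoint p))) = 0 := hφ _ sub_mem
    rwa [map_sub, map_sub, sub_eq_zero, aeval_z.commutes, φ.commutes] at apply_eq_zero
  refine ⟨φ, fun b ↦ ?_, ?_⟩
  · simpa [aeval_z] using (apply_eq (Polynomial.C b)).trans (Polynomial.eval₂_C _ _)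
  · simpa [aeval_z] using (apply_eq Polynomial.X).trans (Polynomial.eval₂_X _ _)

end FibrePoints

lemma ncard_setOf_isRoot {K : Type*} [Field K] [IsAlgClosed K] {f : Polynomial K}
    (hf : f.Separable) : {ρ | f.IsRoot ρ}.ncard = f.natDegree := by
  classical
  have setOf_eq : {ρ | f.IsRoot ρ} = f.roots.toFinset := by
    ext ρ
    simp [hf.ne_zero]
  rw [setOf_eq, ncard_coe_finset, Multiset.toFinset_card_of_nodup (Polynomial.nodup_roots hf),
    IsAlgClosed.card_roots_eq_natDegree]

lemma exists_le_ncard_algHomFibre {e : ℕ} {K A : Type*} [Field K] [IsAlgClosed K]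
    [CharZero K] [CommRing A] [IsDomain A] [Algebra K A] [Algebra (MvPolynomial (Fin e) K) A]
    [IsScalarTower K (MvPolynomial (Fin e) K) A] [Module.Finite (MvPolynomial (Fin e) K) A]
    [FaithfulSMul (MvPolynomial (Fin e) K) A] {D : ℕ} {g : Fin D → A}
    (hg : LinearIndependent (MvPolynomial (Fin e) K) g) : ∃ c : Fin e → K,
      (algHomFibre A (aeval (R := K) c)).Finite ∧
      D ≤ (algHomFibre A (aeval (R := K) c)).ncard := by
  obtain ⟨z, D_le, resultant_ne_zero⟩ := exists_le_natDegree_minpoly_and_resultant_ne_zero hg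
  obtain ⟨c, hc⟩ := exists_eval_ne_zero resultant_ne_zero
  have monic := minpoly.monic (Algebra.IsIntegral.isIntegral (R := MvPolynomial (Fin e) K) z)
  have separable := separable_map_of_resultant_ne_zero monic
    ((aeval c : MvPolynomial (Fin e) K →ₐ[K] K) : MvPolynomial (Fin e) K →+* K)
    (by simpa only [coe_aeval_eq_eval] using hc)
  have : Algebra.FiniteType K A := .trans (S := MvPolynomial (Fin e) K) inferInstance inferInstance
  have fibre_finite := finite_algHomFibre (A := A)
    (aeval c : MvPolynomial (Fin e) K →ₐ[K] K)
  refine ⟨c, fibre_finite, ?_⟩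
  calc D ≤ (minpoly (MvPolynomial (Fin e) K) z).natDegree := D_le
    _ = {ρ | (Polynomial.map _ (minpoly (MvPolynomial (Fin e) K) z)).IsRoot ρ}.ncard := by
      rw [ncard_setOf_isRoot separable, monic.natDegree_map]
    _ ≤ ((fun φ : A →ₐ[K] K ↦ φ z) '' _).ncard := ncard_le_ncard (fun ρ hρ ↦ by
      obtain ⟨φ, hφ, φ_z⟩ := exists_algHom_of_isRoot_map_minpoly z (aeval c) hρ
      exact ⟨φ, hφ, φ_z⟩) (fibre_finite.image _)
    _ ≤ _ := ncard_image_le fibre_finite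

lemma IsLinearNormalization.exists_finrank_pow_le_and_le_ncard {e : ℕ} {K A : Type*} [Field K]
    [IsAlgClosed K] [CharZero K] [CommRing A] [IsDomain A] [Algebra K A]
    [Algebra (MvPolynomial (Fin e) K) A] [IsScalarTower K (MvPolynomial (Fin e) K) A]
    [FaithfulSMul (MvPolynomial (Fin e) K) A] {Z : Submodule K A} {G : ℕ}
    (H : IsLinearNormalization e Z G) : ∃ (D : ℕ) (c : Fin e → K),
      (∀ m, Module.finrank K ↥(Z ^ m) ≤ D * monomialCount e m) ∧
      {φ : A →ₐ[K] K | ∀ i, φ (algebraMap (MvPolynomial (Fin e) K) A (X i)) = c i}.Finite ∧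
      D ≤ {φ : A →ₐ[K] K |
        ∀ i, φ (algebraMap (MvPolynomial (Fin e) K) A (X i)) = c i}.ncard := by
  have := H.finite
  obtain ⟨D, g, hg, -, h, h_ne_zero, h_smul⟩ :=
    exists_linearIndependent_smul_mem_span_of_fg (MvPolynomial (Fin e) K) (H.fg.pow G)
  obtain ⟨c, fibre_finite, D_le⟩ := exists_le_ncard_algHomFibre hg
  rw [algHomFibre_aeval] at fibre_finite D_le
  exact ⟨D, c, fun m ↦ H.finrank_pow_le hg h_ne_zero fun w _ ↦ H.smul_mem_span h_smul w,
    fibre_finite, D_le⟩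

section LinearSections

variable {n : ℕ}

variable (P : Ideal (MvPolynomial (Fin n) ℂ))

/-- The points of `zeroLocus n P`, as `ℂ`-algebra homomorphisms from its coordinate ring to `ℂ`. -/
def zeroLocusEquivAlgHom :
    zeroLocus n (P : Set (MvPolynomial (Fin n) ℂ)) ≃ (MvPolynomial (Fin n) ℂ ⧸ P →ₐ[ℂ] ℂ) where
  toFun v := Ideal.Quotient.liftₐ P (aeval v.1) fun f hf ↦ by rw [aeval_eq_eval]; exact v.2 f hf
  invFun φ := ⟨fun i ↦ φ (quotientCoord P i), fun f hf ↦ by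
    have apply_eq := comp_aeval_apply (quotientCoord P) φ f
    rw [aeval_quotientCoord, Ideal.Quotient.eq_zero_iff_mem.2 hf, map_zero] at apply_eq
    exact apply_eq.symm⟩
  left_inv v := by
    ext i
    simp [quotientCoord]
  right_inv φ := AlgHom.ext fun a ↦ by
    obtain ⟨p, rfl⟩ := Ideal.Quotient.mk_surjective a
    exact (comp_aeval_apply (quotientCoord P) φ p).symm.trans (congrArg φ (aeval_quotientCoord p))

lemma exists_affineSubspace_mem_iff {K : Type*} [Field K] {e : ℕ} {M : Matrix (Fin e) (Fin n) K}
    (hM : LinearIndependent K M.row) (c : Fin e → K) : ∃ L : AffineSubspace K (Fin n → K),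
      Module.finrank K L.direction = n - e ∧ ∀ v, v ∈ L ↔ M.mulVec v = c := by
  have finrank_range : Module.finrank K (LinearMap.range M.mulVecLin) = e := by
    simpa [Matrix.rank] using hM.rank_matrix
  obtain ⟨v₀, rfl⟩ : ∃ v₀, M.mulVecLin v₀ = c :=
    LinearMap.range_eq_top.1 (Submodule.eq_top_of_finrank_eq (by simpa using finrank_range)) c
  refine ⟨AffineSubspace.mk' v₀ (LinearMap.ker M.mulVecLin), ?_, fun v ↦ ?_⟩
  · have rank_nullity := LinearMap.finrank_range_add_finrank_ker M.mulVecLin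
    rw [finrank_range, Module.finrank_fin_fun] at rank_nullity
    rw [AffineSubspace.direction_mk']
    lia
  · rw [AffineSubspace.mem_mk', vsub_eq_sub, LinearMap.mem_ker, map_sub, sub_eq_zero,
      Matrix.mulVecLin_apply]

lemma image_setOf_zeroLocusEquivAlgHom_symm_mem (s : Set (Fin n → ℂ)) :
    (fun φ ↦ ((zeroLocusEquivAlgHom P).symm φ : Fin n → ℂ)) ''
      {φ | (fun i ↦ φ (quotientCoord P i)) ∈ s} =
    zeroLocus n (P : Set (MvPolynomial (Fin n) ℂ)) ∩ s := by
  ext v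
  refine ⟨?_, fun ⟨hv, hs⟩ ↦ ⟨zeroLocusEquivAlgHom P ⟨v, hv⟩, ?_, ?_⟩⟩
  · rintro ⟨φ, hφ, rfl⟩
    exact ⟨((zeroLocusEquivAlgHom P).symm φ).2, hφ⟩
  · change ((zeroLocusEquivAlgHom P).symm (zeroLocusEquivAlgHom P ⟨v, hv⟩) : Fin n → ℂ) ∈ s
    rwa [Equiv.symm_apply_apply]
  · simp only [Equiv.symm_apply_apply]

lemma finite_zeroLocus_inter_iff (s : Set (Fin n → ℂ)) :
    (zeroLocus n (P : Set (MvPolynomial (Fin n) ℂ)) ∩ s).Finite ↔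
      {φ : MvPolynomial (Fin n) ℂ ⧸ P →ₐ[ℂ] ℂ | (fun i ↦ φ (quotientCoord P i)) ∈ s}.Finite := by
  rw [← image_setOf_zeroLocusEquivAlgHom_symm_mem]
  exact finite_image_iff (Subtype.val_injective.comp (Equiv.injective _)).injOn

lemma ncard_zeroLocus_inter (s : Set (Fin n → ℂ)) :
    (zeroLocus n (P : Set (MvPolynomial (Fin n) ℂ)) ∩ s).ncard =
      {φ : MvPolynomial (Fin n) ℂ ⧸ P →ₐ[ℂ] ℂ | (fun i ↦ φ (quotientCoord P i)) ∈ s}.ncard := by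
  rw [← image_setOf_zeroLocusEquivAlgHom_symm_mem]
  exact ncard_image_of_injective _ (Subtype.val_injective.comp (Equiv.injective _))

lemma exists_affineSubspace_le_ncard_inter [P.IsPrime] :
    ∃ D : ℕ, (∀ m, hilbertFunction P m ≤ D * monomialCount (quotientDim P) m) ∧
      ∃ L : AffineSubspace ℂ (Fin n → ℂ), Module.finrank ℂ L.direction = n - quotientDim P ∧
        (zeroLocus n (P : Set (MvPolynomial (Fin n) ℂ)) ∩ ↑L).Finite ∧
        D ≤ (zeroLocus n (P : Set (MvPolynomial (Fin n) ℂ)) ∩ ↑L).ncard := by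
  obtain ⟨y, -, y_mem, hy, G, H⟩ := exists_quotient_normalization P
  obtain ⟨D, c, finrank_le, fibre_finite, D_le⟩ :=
    let := algebraOfTuple (K := ℂ) y
    have := isScalarTower_algebraOfTuple (K := ℂ) y
    have := faithfulSMul_algebraOfTuple hy
    H.exists_finrank_pow_le_and_le_ncard
  choose a ha using fun i ↦ (Submodule.mem_span_range_iff_exists_fun ℂ).1 (y_mem i)
  have a_independent : LinearIndependent ℂ (Matrix.of a).row := by
    refine .of_comp (Fintype.linearCombination ℂ (quotientCoord P)) ?_
    have comp_eq : ⇑(Fintype.linearCombination ℂ (quotientCoord P)) ∘ (Matrix.of a).row = y :=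
      _root_.funext ha
    rw [comp_eq]
    exact hy.linearIndependent
  obtain ⟨L, finrank_direction, mem_L⟩ := exists_affineSubspace_mem_iff a_independent c
  have mem_fibre (φ : MvPolynomial (Fin n) ℂ ⧸ P →ₐ[ℂ] ℂ) :
      (∀ i, φ (y i) = c i) ↔ (fun j ↦ φ (quotientCoord P j)) ∈ L := by
    rw [mem_L, _root_.funext_iff]
    refine forall_congr' fun i ↦ ?_
    rw [← ha i, map_sum]
    simp only [map_smul, smul_eq_mul]
    rfl
  have algebraMap_X (i : Fin (quotientDim P)) : aeval (R := ℂ) y (X i) = y i := aeval_X y i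
  simp only [RingHom.algebraMap_toAlgebra, AlgHom.toRingHom_eq_coe, RingHom.coe_coe,
    algebraMap_X, mem_fibre] at fibre_finite D_le
  exact ⟨D, finrank_le, L, finrank_direction, (finite_zeroLocus_inter_iff P L).2 fibre_finite,
    (ncard_zeroLocus_inter P L).ge.trans' D_le⟩

end LinearSections

/-! ### Uniform bounds for finite fibres -/

section SeparatingElement

variable {K T : Type*} [Field K] [CommRing T] [Algebra K T]

lemma exists_apply_ne_zero_and_apply_eq_zero {φ φ' : T →ₐ[K] K} (hne : φ' ≠ φ) :
    ∃ t, φ t ≠ 0 ∧ φ' t = 0 := by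
  obtain ⟨t, ht⟩ := DFunLike.ne_iff.1 hne
  exact ⟨t - algebraMap K T (φ' t), by simpa [sub_eq_zero] using ht.symm, by simp⟩

lemma exists_apply_ne_zero_and_forall_apply_eq_zero {Φ : Set (T →ₐ[K] K)} (hΦ : Φ.Finite)
    (φ : T →ₐ[K] K) : ∃ s, φ s ≠ 0 ∧ ∀ φ' ∈ Φ, φ' ≠ φ → φ' s = 0 := by
  classical
  choose! t t_ne_zero t_eq_zero using
    fun φ' (hne : φ' ≠ φ) ↦ exists_apply_ne_zero_and_apply_eq_zero hne
  refine ⟨∏ φ' ∈ hΦ.toFinset.erase φ, t φ', ?_, fun φ' hφ' hne ↦ ?_⟩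
  · rw [map_prod]
    exact Finset.prod_ne_zero_iff.2 fun φ' hφ' ↦ t_ne_zero φ' (Finset.ne_of_mem_erase hφ')
  · rw [map_prod]
    exact Finset.prod_eq_zero (Finset.mem_erase.2 ⟨hne, hΦ.mem_toFinset.2 hφ'⟩) (t_eq_zero φ' hne)

end SeparatingElement

lemma mem_of_forall_algHom_apply_eq_zero {K T : Type*} [Field K] [IsAlgClosed K] [CommRing T]
    [Algebra K T] [Algebra.FiniteType K T] {Q : Ideal T} (hQ : Q.IsRadical) {a : T}
    (h : ∀ φ : T →ₐ[K] K, (∀ b ∈ Q, φ b = 0) → φ a = 0) : a ∈ Q := by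
  have : IsJacobsonRing T := isJacobsonRing_of_finiteType (A := K)
  rw [← IsJacobsonRing.out ‹_› hQ, Ideal.jacobson, Ideal.mem_sInf]
  rintro m ⟨hQm, hm⟩
  obtain ⟨φ, hφ⟩ := exists_algHom_of_isMaximal (K := K) m
  have eq_ker : m = RingHom.ker φ := hm.eq_of_le (RingHom.ker_ne_top _) hφ
  rw [eq_ker]
  exact h φ fun b hb ↦ hφ b (hQm hb)

section FibreBound

variable {K S T : Type*} [Field K] [CommRing S] [CommRing T] [Algebra K S] [Algebra K T]
  [Algebra S T]

lemma exists_ncard_algHomFibre_inter_le [Algebra.FiniteType K T] {r : T} (hr : IsIntegral S r)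
    (h : ∀ x, ∃ m : ℕ, IsIntegral S (r ^ m * x)) :
    ∃ N, ∀ ψ : S →ₐ[K] K, (algHomFibre T ψ ∩ {φ | φ r ≠ 0}).Finite ∧
      (algHomFibre T ψ ∩ {φ | φ r ≠ 0}).ncard ≤ N := by
  obtain ⟨s, adjoin_eq_top⟩ := Algebra.FiniteType.out (R := K) (A := T)
  choose m hm using h
  let y : Option s → T := fun o ↦ o.elim r fun x ↦ r ^ m x * x
  obtain ⟨N, hN⟩ := exists_finset_apply_mem (K := K) (B := S) (y := y) fun
    | none => hr
    | some x => hm x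
  refine ⟨N, fun ψ ↦ ?_⟩
  obtain ⟨F, card_le, apply_mem⟩ := hN ψ
  have injOn : InjOn (fun φ o ↦ φ (y o)) (algHomFibre T ψ ∩ {φ | φ r ≠ 0}) := by
    rintro φ - φ' ⟨-, hφ'⟩ eq_on
    refine AlgHom.ext_of_adjoin_eq_top adjoin_eq_top fun x hx ↦ ?_
    have apply_r : φ r = φ' r := congrFun eq_on none
    have apply_mul : φ (r ^ m x * x) = φ' (r ^ m x * x) := congrFun eq_on (some ⟨x, hx⟩)
    rw [map_mul, map_mul, map_pow, map_pow, apply_r] at apply_mul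
    exact mul_left_cancel₀ (pow_ne_zero _ hφ') apply_mul
  have image_subset : (fun φ o ↦ φ (y o)) '' (algHomFibre T ψ ∩ {φ | φ r ≠ 0}) ⊆ F := by
    rintro _ ⟨φ, hφ, rfl⟩
    exact apply_mem φ hφ.1
  refine ⟨.of_finite_image (F.finite_toSet.subset image_subset) injOn, ?_⟩
  rw [← injOn.ncard_image]
  exact ((ncard_le_ncard image_subset F.finite_toSet).trans_eq (ncard_coe_finset F)).trans card_le

variable [IsScalarTower K S T] [IsAlgClosed K] [Algebra.FiniteType K T]

lemma eq_ker_of_comap_eq {ψ : S →ₐ[K] K} {φ : T →ₐ[K] K} (hφ : φ ∈ algHomFibre T ψ) {s : T}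
    (hs : ∀ φ' ∈ algHomFibre T ψ, φ' ≠ φ → φ' s = 0) {Q : Ideal T} (hQ : Q.IsPrime)
    (comap_eq : Q.comap (algebraMap S T) = (RingHom.ker φ).comap (algebraMap S T))
    (s_notMem : s ∉ Q) : Q = RingHom.ker φ := by
  have ker_isMaximal : (RingHom.ker φ).IsMaximal :=
    RingHom.ker_isMaximal_of_surjective φ fun c ↦ ⟨algebraMap K T c, φ.commutes c⟩
  refine (ker_isMaximal.eq_of_le hQ.ne_top fun a ha ↦ ?_).symm
  refine (hQ.mem_or_mem (mem_of_forall_algHom_apply_eq_zero (K := K) (a := a * s)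
    hQ.isRadical fun φ' hφ' ↦ ?_)).resolve_right s_notMem
  have mem_fibre : φ' ∈ algHomFibre T ψ := fun z ↦ by
    have mem_comap : z - algebraMap K S (ψ z) ∈ Q.comap (algebraMap S T) := by
      rw [comap_eq, Ideal.mem_comap, RingHom.mem_ker, hφ, map_sub, ψ.commutes]
      exact sub_self _
    have apply_eq_zero := hφ' _ mem_comap
    rwa [map_sub, map_sub, ← IsScalarTower.algebraMap_apply, φ'.commutes, sub_eq_zero]
      at apply_eq_zero
  rw [map_mul]
  by_cases hne : φ' = φ
  · rw [hne, show φ a = 0 from ha, zero_mul]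
  · rw [hs φ' mem_fibre hne, mul_zero]

lemma exists_isIntegral_of_finite_algHomFibre {ψ : S →ₐ[K] K}
    (fibre_finite : (algHomFibre T ψ).Finite)
    {φ : T →ₐ[K] K} (hφ : φ ∈ algHomFibre T ψ) :
    ∃ r, φ r ≠ 0 ∧ IsIntegral S r ∧ ∀ x, ∃ m : ℕ, IsIntegral S (r ^ m * x) := by
  have : Algebra.FiniteType S T := .of_restrictScalars_finiteType K S T
  obtain ⟨s, s_ne_zero, hs⟩ := exists_apply_ne_zero_and_forall_apply_eq_zero fibre_finite φ
  let q : PrimeSpectrum T := ⟨RingHom.ker φ, RingHom.ker_isPrime _⟩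
  have := q.2
  have : Algebra.QuasiFiniteAt S q.asIdeal := by
    refine .of_isOpen_singleton_fiber q
      ⟨PrimeSpectrum.basicOpen s, (PrimeSpectrum.basicOpen s).isOpen, ?_⟩
    ext ⟨Q, comap_eq⟩
    refine ⟨fun s_notMem ↦ Subtype.ext <| PrimeSpectrum.ext <| eq_ker_of_comap_eq hφ hs Q.2
      (congrArg PrimeSpectrum.asIdeal comap_eq) s_notMem, fun mem ↦ ?_⟩
    obtain ⟨rfl⟩ := (congrArg Subtype.val mem : Q = q)
    exact s_ne_zero
  exact Algebra.zariskisMainProperty_iff.1 (.of_finiteType (R := S) q.asIdeal)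

variable (K S T)

lemma exists_ncard_algHomFibre_le :
    ∃ N, ∀ ψ : S →ₐ[K] K, (algHomFibre T ψ).Finite → (algHomFibre T ψ).ncard ≤ N := by
  let G : Set T := {r | IsIntegral S r ∧ ∀ x, ∃ m : ℕ, IsIntegral S (r ^ m * x)}
  have : IsNoetherianRing T := Algebra.FiniteType.isNoetherianRing K T
  obtain ⟨F, F_subset, span_eq⟩ := (Submodule.fg_span_iff_fg_span_finset_subset G).1
    (IsNoetherian.noetherian (Submodule.span T G))
  choose N inter_finite ncard_le using fun r : F ↦
    exists_ncard_algHomFibre_inter_le (K := K) (F_subset r.2).1 (F_subset r.2).2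
  refine ⟨∑ r, N r, fun ψ fibre_finite ↦ ?_⟩
  have fibre_subset : algHomFibre T ψ ⊆
      ⋃ r ∈ (Finset.univ : Finset F), algHomFibre T ψ ∩ {φ | φ r ≠ 0} := by
    intro φ hφ
    obtain ⟨r, r_ne_zero, hr⟩ := exists_isIntegral_of_finite_algHomFibre fibre_finite hφ
    obtain ⟨r', r'_mem, r'_ne_zero⟩ : ∃ r' ∈ F, φ r' ≠ 0 := by
      by_contra! apply_eq_zero
      have span_le : Submodule.span T (F : Set T) ≤ RingHom.ker φ :=
        Submodule.span_le.2 apply_eq_zero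
      exact r_ne_zero (span_le (span_eq ▸ Submodule.subset_span hr))
    exact mem_biUnion (Finset.mem_univ (⟨r', r'_mem⟩ : F)) ⟨hφ, r'_ne_zero⟩
  calc (algHomFibre T ψ).ncard
    _ ≤ (⋃ r ∈ (Finset.univ : Finset F), algHomFibre T ψ ∩ {φ | φ r ≠ 0}).ncard :=
      ncard_le_ncard fibre_subset
        (Set.Finite.biUnion (Finset.finite_toSet _) fun r _ ↦ (inter_finite r ψ))
    _ ≤ ∑ r : F, (algHomFibre T ψ ∩ {φ | φ r ≠ 0}).ncard := Finset.set_ncard_biUnion_le _ _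
    _ ≤ ∑ r, N r := Finset.sum_le_sum fun r _ ↦ ncard_le r ψ

end FibreBound

section FamiliesOfFibres

variable {K : Type*} [Field K]

lemma exists_ncard_setOf_apply_eq_le {T : Type*} [CommRing T] [Algebra K T]
    [Algebra.FiniteType K T] [IsAlgClosed K] {ι : Type*} (y : ι → T) :
    ∃ N, ∀ c : ι → K, {φ : T →ₐ[K] K | ∀ i, φ (y i) = c i}.Finite →
      {φ : T →ₐ[K] K | ∀ i, φ (y i) = c i}.ncard ≤ N := by
  let := algebraOfTuple (K := K) y
  have := isScalarTower_algebraOfTuple (K := K) y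
  have algebraMap_X (i : ι) : algebraMap (MvPolynomial ι K) T (X i) = y i := aeval_X y i
  obtain ⟨N, hN⟩ := exists_ncard_algHomFibre_le K (MvPolynomial ι K) T
  refine ⟨N, fun c ↦ ?_⟩
  simpa only [algHomFibre_aeval, algebraMap_X] using hN (aeval c)

variable {A : Type*} [CommRing A] [Algebra K A] {ι κ : Type*} [Fintype κ]

lemma setOf_apply_universalSystem_eq (x : κ → A) (M : Matrix ι κ K) (b : ι → K) :
    {φ : MvPolynomial (ι × κ) A →ₐ[K] K | ∀ o,
      φ (Sum.elim (fun i ↦ ∑ j, X (i, j) * C (x j)) X o) = Sum.elim b (fun ij ↦ M ij.1 ij.2) o} =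
    (fun φ ↦ aevalTower φ fun ij ↦ M ij.1 ij.2) ''
      {φ : A →ₐ[K] K | M.mulVec (fun j ↦ φ (x j)) = b} := by
  have mem_iff (φ : MvPolynomial (ι × κ) A →ₐ[K] K) (hφ : ∀ ij, φ (X ij) = M ij.1 ij.2) :
      (∀ i, φ (∑ j, X (i, j) * C (x j)) = b i) ↔ M.mulVec (fun j ↦ φ (C (x j))) = b := by
    simp only [map_sum, map_mul, hφ, _root_.funext_iff, Matrix.mulVec, dotProduct]
  ext φ
  simp only [mem_ofPred_eq, Sum.forall, Sum.elim_inl, Sum.elim_inr, mem_image]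
  refine ⟨fun ⟨apply_sum, apply_X⟩ ↦ ⟨φ.comp (IsScalarTower.toAlgHom K A _),
    (mem_iff φ apply_X).1 apply_sum, ?_⟩, ?_⟩
  · refine AlgHom.coe_ringHom_injective (ringHom_ext (fun a ↦ ?_) fun ij ↦ ?_)
    · exact aevalTower_C _ _ a
    · exact (aevalTower_X _ _ ij).trans (apply_X ij).symm
  · rintro ⟨φ, hφ, rfl⟩
    refine ⟨(mem_iff _ (aevalTower_X φ _)).2 ?_, aevalTower_X φ _⟩
    simpa only [aevalTower_C] using hφ

lemma exists_ncard_setOf_mulVec_eq_le [IsAlgClosed K] [Finite ι] [Algebra.FiniteType K A]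
    (x : κ → A) :
    ∃ N, ∀ (M : Matrix ι κ K) (b : ι → K),
      {φ : A →ₐ[K] K | M.mulVec (fun j ↦ φ (x j)) = b}.Finite →
      {φ : A →ₐ[K] K | M.mulVec (fun j ↦ φ (x j)) = b}.ncard ≤ N := by
  have : Algebra.FiniteType K (MvPolynomial (ι × κ) A) :=
    .trans (S := A) inferInstance inferInstance
  obtain ⟨N, hN⟩ := exists_ncard_setOf_apply_eq_le (K := K) (T := MvPolynomial (ι × κ) A)
    (Sum.elim (fun i ↦ ∑ j, X (i, j) * C (x j)) X)
  refine ⟨N, fun M b solutions_finite ↦ ?_⟩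
  have aevalTower_injective : Function.Injective
      fun φ : A →ₐ[K] K ↦ aevalTower φ fun ij : ι × κ ↦ M ij.1 ij.2 := fun φ φ' eq ↦
    AlgHom.ext fun a ↦ by simpa using DFunLike.congr_fun eq (C a)
  have ncard_le := hN (Sum.elim b fun ij ↦ M ij.1 ij.2)
  rw [setOf_apply_universalSystem_eq, ncard_image_of_injective _ aevalTower_injective] at ncard_le
  exact ncard_le (solutions_finite.image _)

end FamiliesOfFibres

lemma exists_matrix_mem_iff {K : Type*} [Field K] {n : ℕ} {L : AffineSubspace K (Fin n → K)}
    {v₀ : Fin n → K} (hv₀ : v₀ ∈ L) :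
    ∃ (M : Matrix (Fin n) (Fin n) K) (b : Fin n → K), ∀ v, v ∈ L ↔ M.mulVec v = b := by
  obtain ⟨W, hW⟩ := Submodule.exists_isCompl L.direction
  refine ⟨LinearMap.toMatrix' (W.projection L.direction hW.symm),
    W.projection L.direction hW.symm v₀, fun v ↦ ?_⟩
  rw [LinearMap.toMatrix'_mulVec, ← AffineSubspace.vsub_right_mem_direction_iff_mem hv₀,
    vsub_eq_sub, ← sub_eq_zero, ← map_sub, ← LinearMap.mem_ker, Submodule.ker_projection]

lemma exists_ncard_zeroLocus_inter_affineSubspace_le {n : ℕ} (P : Ideal (MvPolynomial (Fin n) ℂ)) :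
    ∃ N, ∀ L : AffineSubspace ℂ (Fin n → ℂ),
      (zeroLocus n (P : Set (MvPolynomial (Fin n) ℂ)) ∩ ↑L).Finite →
      (zeroLocus n (P : Set (MvPolynomial (Fin n) ℂ)) ∩ ↑L).ncard ≤ N := by
  obtain ⟨N, hN⟩ := exists_ncard_setOf_mulVec_eq_le (K := ℂ) (ι := Fin n) (quotientCoord P)
  refine ⟨N, fun L ↦ ?_⟩
  obtain L_empty | ⟨v₀, hv₀⟩ := (L : Set (Fin n → ℂ)).eq_empty_or_nonempty
  · simp [L_empty]
  · obtain ⟨M, b, mem_L⟩ := exists_matrix_mem_iff hv₀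
    have L_eq : (L : Set (Fin n → ℂ)) = {v | M.mulVec v = b} := Set.ext mem_L
    rw [finite_zeroLocus_inter_iff, ncard_zeroLocus_inter, L_eq]
    exact hN M b

/-! ### Primes containing the low-degree part of an ideal -/

section TruncationPrimes

variable {n : ℕ} {K : Type*} [Field K]

/-- `Q` is a prime ideal between the ideal generated by the elements of `I` of degree at most `δ`
and `I` itself. For `I` the ideal of a variety `V`, such `Q` are the ideals of the irreducible
varieties containing `V` on which all polynomials of degree at most `δ` vanishing on `V` vanish. -/
def IsTruncationPrime (I : Ideal (MvPolynomial (Fin n) K)) (δ : ℕ)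
    (Q : Ideal (MvPolynomial (Fin n) K)) : Prop :=
  Q.IsPrime ∧ Q ≤ I ∧ ∀ f ∈ I, f.totalDegree ≤ δ → f ∈ Q

/-- The least codimension of a prime between the ideal generated by the elements of `I` of degree
at most `δ` and `I`; it is meaningful for prime `I`. -/
def truncationCodim (I : Ideal (MvPolynomial (Fin n) K)) (δ : ℕ) : ℕ :=
  sInf ((fun Q ↦ n - quotientDim Q) '' {Q | IsTruncationPrime I δ Q})

/-- The `i`-th partial degree of a prime ideal `I`: the least degree bound `δ` for which the
elements of `I` of degree at most `δ` cut out codimension at least `i`. It is meaningful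
for `i ≤ n - quotientDim I`. -/
def idealPartialDegree (I : Ideal (MvPolynomial (Fin n) K)) (i : ℕ) : ℕ :=
  sInf {δ | i ≤ truncationCodim I δ}

lemma quotientDim_bot : quotientDim (⊥ : Ideal (MvPolynomial (Fin n) K)) = n := by
  rw [quotientDim, ringKrullDim_eq_of_ringEquiv (RingEquiv.quotientBot _),
    MvPolynomial.ringKrullDim_of_isNoetherianRing, ringKrullDim_eq_zero_of_field, zero_add,
    Nat.card_fin]
  rfl

variable {I Q : Ideal (MvPolynomial (Fin n) K)} {i j δ : ℕ}

lemma isTruncationPrime_self [hI : I.IsPrime] : IsTruncationPrime I δ I :=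
  ⟨hI, le_rfl, fun _ hf _ ↦ hf⟩

lemma IsTruncationPrime.truncationCodim_le (h : IsTruncationPrime I δ Q) :
    truncationCodim I δ ≤ n - quotientDim Q :=
  Nat.sInf_le (mem_image_of_mem _ h)

lemma idealPartialDegree_le (h : i ≤ truncationCodim I δ) : idealPartialDegree I i ≤ δ :=
  Nat.sInf_le h

section Prime

variable [I.IsPrime]

variable (I δ) in
lemma exists_isTruncationPrime_quotientDim_eq :
    ∃ Q, IsTruncationPrime I δ Q ∧ n - quotientDim Q = truncationCodim I δ :=
  Nat.sInf_mem (Nonempty.image _ ⟨I, isTruncationPrime_self⟩)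

variable (I δ) in
lemma truncationCodim_le : truncationCodim I δ ≤ n - quotientDim I :=
  isTruncationPrime_self.truncationCodim_le

lemma isTruncationPrime_zero_bot : IsTruncationPrime I 0 ⊥ := by
  refine ⟨inferInstance, bot_le, fun f hf totalDegree_le ↦ ?_⟩
  obtain ⟨c, rfl⟩ : ∃ c, f = C c :=
    ⟨_, totalDegree_eq_zero_iff_eq_C.1 (Nat.le_zero.1 totalDegree_le)⟩
  by_contra C_ne_zero
  have c_ne_zero : c ≠ 0 := fun h ↦ C_ne_zero (by rw [h, C_0]; exact zero_mem _)
  exact Ideal.IsPrime.ne_top ‹_› (Ideal.eq_top_of_isUnit_mem _ hf ((IsUnit.mk0 c c_ne_zero).map C))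

variable (I) in
lemma truncationCodim_zero : truncationCodim I 0 = 0 :=
  Nat.le_zero.1 <| isTruncationPrime_zero_bot.truncationCodim_le.trans_eq <| by
    rw [quotientDim_bot, Nat.sub_self]

variable (I) in
lemma exists_truncationCodim_eq : ∃ δ, truncationCodim I δ = n - quotientDim I := by
  obtain ⟨s, span_eq⟩ := IsNoetherian.noetherian I
  obtain ⟨Q, ⟨-, Q_le, mem_Q⟩, codim_eq⟩ :=
    exists_isTruncationPrime_quotientDim_eq I (s.sup totalDegree)
  have le_Q : I ≤ Q := span_eq ▸ Submodule.span_le.2 fun f hf ↦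
    mem_Q f (span_eq ▸ Submodule.subset_span hf) (Finset.le_sup (f := totalDegree) hf)
  exact ⟨s.sup totalDegree, by rw [← codim_eq, Q_le.antisymm le_Q]⟩

lemma le_truncationCodim_idealPartialDegree (hi : i ≤ n - quotientDim I) :
    i ≤ truncationCodim I (idealPartialDegree I i) :=
  let ⟨δ, codim_eq⟩ := exists_truncationCodim_eq I
  Nat.sInf_mem (s := {δ | i ≤ truncationCodim I δ}) ⟨δ, hi.trans_eq codim_eq.symm⟩

lemma idealPartialDegree_mono (hij : i ≤ j) (hj : j ≤ n - quotientDim I) :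
    idealPartialDegree I i ≤ idealPartialDegree I j :=
  idealPartialDegree_le (hij.trans (le_truncationCodim_idealPartialDegree hj))

lemma idealPartialDegree_pos (hi : 0 < i) (hi' : i ≤ n - quotientDim I) :
    0 < idealPartialDegree I i := by
  refine Nat.pos_of_ne_zero fun eq_zero ↦ hi.not_ge ?_
  have le := le_truncationCodim_idealPartialDegree hi'
  rwa [eq_zero, truncationCodim_zero] at le

lemma prod_idealPartialDegree_le (hij : i ≤ j) (hj : j ≤ n - quotientDim I) :
    ∏ k ∈ Finset.Icc 1 j, idealPartialDegree I k ≤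
      (∏ k ∈ Finset.Icc 1 i, idealPartialDegree I k) * idealPartialDegree I j ^ (j - i) := by
  have Icc_eq : Finset.Icc 1 j = Finset.Icc 1 i ∪ Finset.Ioc i j := by
    ext k; simp only [Finset.mem_Icc, Finset.mem_union, Finset.mem_Ioc]; omega
  have disjoint : Disjoint (Finset.Icc 1 i) (Finset.Ioc i j) :=
    Finset.disjoint_left.2 fun k ↦ by simp only [Finset.mem_Icc, Finset.mem_Ioc]; omega
  rw [Icc_eq, Finset.prod_union disjoint, ← Nat.card_Ioc]
  exact Nat.mul_le_mul_left _ <| Finset.prod_le_pow_card _ _ _ fun k hk ↦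
    idealPartialDegree_mono (Finset.mem_Ioc.1 hk).2 hj

end Prime

end TruncationPrimes

/-! ### The product of the partial degrees and the Hilbert function -/

section ProductBound

variable {n : ℕ} {K : Type*} [Field K] [Infinite K]

lemma pow_quotientDim_mul_hilbertFunction_le (P : Ideal (MvPolynomial (Fin n) K)) [P.IsPrime]
    {m M : ℕ} (h : m ≤ M) :
    (M + 1) ^ quotientDim P * hilbertFunction P m ≤
      2 ^ n * n.factorial * ((m + 1) ^ quotientDim P * hilbertFunction P M) := by
  set e := quotientDim P
  have e_le : e ≤ n := quotientDim_le P
  have two_pow_le : 2 ^ e ≤ 2 ^ n := Nat.pow_le_pow_right two_pos e_le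
  obtain hM | hM := le_total (M + 1) (2 * (m + 1))
  · calc (M + 1) ^ e * hilbertFunction P m
        ≤ (2 * (m + 1)) ^ e * hilbertFunction P M :=
          Nat.mul_le_mul (Nat.pow_le_pow_left hM _) (hilbertFunction_mono h)
      _ = 2 ^ e * ((m + 1) ^ e * hilbertFunction P M) := by rw [mul_pow, mul_assoc]
      _ ≤ 2 ^ n * n.factorial * ((m + 1) ^ e * hilbertFunction P M) :=
          Nat.mul_le_mul_right _ (two_pow_le.trans (Nat.le_mul_of_pos_right _ n.factorial_pos))
  · have pow_le : (M - m + 1) ^ e ≤ n.factorial * monomialCount e (M - m) :=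
      (pow_le_factorial_mul_monomialCount e (M - m)).trans
        (Nat.mul_le_mul_right _ (Nat.factorial_le e_le))
    have growth : hilbertFunction P m * monomialCount e (M - m) ≤
        hilbertFunction P M * (m + 1) ^ e := by
      refine (hilbertFunction_mul_le P m (M - m)).trans ?_
      rw [Nat.add_sub_cancel' h]
      exact Nat.mul_le_mul_left _ (monomialCount_le e m)
    calc (M + 1) ^ e * hilbertFunction P m
        ≤ (2 * (M - m + 1)) ^ e * hilbertFunction P m :=
          Nat.mul_le_mul_right _ (Nat.pow_le_pow_left (by omega) _)
      _ ≤ 2 ^ n * (n.factorial * monomialCount e (M - m)) * hilbertFunction P m := by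
          rw [mul_pow]
          exact Nat.mul_le_mul_right _ (Nat.mul_le_mul two_pow_le pow_le)
      _ = 2 ^ n * n.factorial * (hilbertFunction P m * monomialCount e (M - m)) := by ring
      _ ≤ 2 ^ n * n.factorial * (hilbertFunction P M * (m + 1) ^ e) :=
          Nat.mul_le_mul_left _ growth
      _ = 2 ^ n * n.factorial * ((m + 1) ^ e * hilbertFunction P M) := by
          rw [mul_comm (hilbertFunction P M)]

variable (I : Ideal (MvPolynomial (Fin n) K)) [I.IsPrime]

lemma exists_isPrime_quotientDim_eq_hilbertFunction_eq (M : ℕ) :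
    ∃ P : Ideal (MvPolynomial (Fin n) K), P.IsPrime ∧ quotientDim P = n - truncationCodim I M ∧
      ∀ m ≤ M, hilbertFunction P m = hilbertFunction I m := by
  obtain ⟨P, ⟨hP, P_le, mem_P⟩, codim_eq⟩ := exists_isTruncationPrime_quotientDim_eq I M
  have := quotientDim_le P
  exact ⟨P, hP, by omega, fun m hm ↦
    hilbertFunction_eq_of_le P_le fun f hf hd ↦ mem_P f hf (hd.trans hm)⟩

lemma pow_le_mul_hilbertFunction_of_truncationCodim_eq_zero {M : ℕ}
    (h : truncationCodim I M = 0) : (M + 1) ^ n ≤ n.factorial * hilbertFunction I M := by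
  obtain ⟨P, hP, dim_eq, hilbert_eq⟩ := exists_isPrime_quotientDim_eq_hilbertFunction_eq I M
  rw [h, Nat.sub_zero] at dim_eq
  have count_le := monomialCount_le_hilbertFunction P M
  rw [dim_eq, hilbert_eq M le_rfl] at count_le
  exact (pow_le_factorial_mul_monomialCount n M).trans (Nat.mul_le_mul_left _ count_le)

-- With `i` the codimension in degree `M` and `m + 1` the `i`-th partial degree, the codimension in
-- degree `m` is smaller than `i`, and every factor that is new in passing from `m` to `M` is at
-- most `m + 1`. Between the degrees `m` and `M` the Hilbert function of `I` agrees with that of a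
-- prime of codimension `i`, so that it grows like the power `n - i` of the degree.
theorem pow_mul_prod_idealPartialDegree_le (M : ℕ) :
    (M + 1) ^ (n - truncationCodim I M) *
        ∏ j ∈ Finset.Icc 1 (truncationCodim I M), idealPartialDegree I j ≤
      n.factorial * (2 ^ n * n.factorial) ^ truncationCodim I M * hilbertFunction I M := by
  induction M using Nat.strong_induction_on with
  | _ M ih =>
  obtain codim_zero | codim_pos := Nat.eq_zero_or_pos (truncationCodim I M)
  · simpa [codim_zero] using pow_le_mul_hilbertFunction_of_truncationCodim_eq_zero I codim_zero
  obtain ⟨P, hP, dim_eq, hilbert_eq⟩ := exists_isPrime_quotientDim_eq_hilbertFunction_eq I M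
  have i_le : truncationCodim I M ≤ n - quotientDim I := truncationCodim_le I M
  have δ_le : idealPartialDegree I (truncationCodim I M) ≤ M := idealPartialDegree_le le_rfl
  set i := truncationCodim I M
  obtain ⟨m, hm⟩ : ∃ m, idealPartialDegree I i = m + 1 :=
    Nat.exists_eq_add_one.2 (idealPartialDegree_pos codim_pos i_le)
  have codim_lt : truncationCodim I m < i := by
    by_contra! h
    exact (idealPartialDegree_le h).not_gt (by omega)
  have prod_le := prod_idealPartialDegree_le codim_lt.le i_le
  have growth := pow_quotientDim_mul_hilbertFunction_le P (show m ≤ M by omega)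
  rw [hilbert_eq m (by omega), hilbert_eq M le_rfl, dim_eq] at growth
  have ih := ih m (by omega)
  rw [hm] at prod_le
  set i' := truncationCodim I m
  set B := 2 ^ n * n.factorial
  have B_pos : 0 < B := by positivity
  refine Nat.le_of_mul_le_mul_left ?_ (show 0 < (m + 1) ^ (n - i) by positivity)
  calc (m + 1) ^ (n - i) * ((M + 1) ^ (n - i) * ∏ j ∈ Finset.Icc 1 i, idealPartialDegree I j)
      ≤ (m + 1) ^ (n - i) * ((M + 1) ^ (n - i) *
          ((∏ j ∈ Finset.Icc 1 i', idealPartialDegree I j) * (m + 1) ^ (i - i'))) := by gcongr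
    _ = (M + 1) ^ (n - i) *
          ((m + 1) ^ (n - i') * ∏ j ∈ Finset.Icc 1 i', idealPartialDegree I j) := by
        rw [show n - i' = n - i + (i - i') by omega, pow_add]; ring
    _ ≤ (M + 1) ^ (n - i) * (n.factorial * B ^ i' * hilbertFunction I m) := by gcongr
    _ = n.factorial * B ^ i' * ((M + 1) ^ (n - i) * hilbertFunction I m) := by ring
    _ ≤ n.factorial * B ^ i' * (B * ((m + 1) ^ (n - i) * hilbertFunction I M)) := by gcongr
    _ = (m + 1) ^ (n - i) * (n.factorial * B ^ (i' + 1) * hilbertFunction I M) := by ring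
    _ ≤ (m + 1) ^ (n - i) * (n.factorial * B ^ i * hilbertFunction I M) := by
        gcongr (m + 1) ^ (n - i) * (n.factorial * ?_ * hilbertFunction I M)
        exact Nat.pow_le_pow_right B_pos codim_lt

lemma prod_idealPartialDegree_le_of_hilbertFunction_le {D : ℕ}
    (hD : ∀ m, hilbertFunction I m ≤ D * monomialCount (quotientDim I) m) :
    ∏ j ∈ Finset.Icc 1 (n - quotientDim I), idealPartialDegree I j ≤
      n.factorial * (2 ^ n * n.factorial) ^ n * D := by
  obtain ⟨M, codim_eq⟩ := exists_truncationCodim_eq I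
  have pow_mul_prod_le := pow_mul_prod_idealPartialDegree_le I M
  rw [codim_eq, Nat.sub_sub_self (quotientDim_le I)] at pow_mul_prod_le
  refine Nat.le_of_mul_le_mul_left ?_ (show 0 < (M + 1) ^ quotientDim I by positivity)
  calc (M + 1) ^ quotientDim I * ∏ j ∈ Finset.Icc 1 (n - quotientDim I), idealPartialDegree I j
      ≤ n.factorial * (2 ^ n * n.factorial) ^ (n - quotientDim I) * hilbertFunction I M :=
        pow_mul_prod_le
    _ ≤ n.factorial * (2 ^ n * n.factorial) ^ n * (D * (M + 1) ^ quotientDim I) := by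
        gcongr
        · exact Nat.succ_le_of_lt (by positivity)
        · exact Nat.sub_le n _
        · exact (hD M).trans (Nat.mul_le_mul_left _ (monomialCount_le _ M))
    _ = (M + 1) ^ quotientDim I * (n.factorial * (2 ^ n * n.factorial) ^ n * D) := by ring

end ProductBound

/-! ### Choosing the polynomials -/

section Selection

lemma exists_mem_forall_notMem_of_not_le {K E ι : Type*} [Field K] [Infinite K] [AddCommGroup E]
    [Module K E] {U : Submodule K E} {s : Set ι} (hs : s.Finite) {W : ι → Submodule K E}
    (h : ∀ k ∈ s, ¬U ≤ W k) : ∃ g ∈ U, ∀ k ∈ s, g ∉ W k := by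
  have := hs.to_subtype
  by_contra! hc
  have iUnion_eq : ⋃ k : s, (((W k).comap U.subtype : Subspace K U) : Set U) = univ := by
    refine eq_univ_of_forall fun ⟨g, hg⟩ ↦ ?_
    obtain ⟨k, hk, g_mem⟩ := hc g hg
    exact mem_iUnion.2 ⟨⟨k, hk⟩, g_mem⟩
  obtain ⟨k, comap_eq_top⟩ := Subspace.exists_eq_top_of_iUnion_eq_univ iUnion_eq
  exact h k k.2 (Submodule.comap_subtype_eq_top.1 comap_eq_top)

variable {n : ℕ} {K : Type*} [Field K] [Infinite K] {I J : Ideal (MvPolynomial (Fin n) K)}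
  [I.IsPrime] {i : ℕ}

lemma exists_mem_totalDegree_le_forall_notMem (hi : i ≤ n - quotientDim I)
    {s : Set (Ideal (MvPolynomial (Fin n) K))} (hs : s.Finite)
    (h : ∀ Q ∈ s, Q.IsPrime ∧ Q ≤ I ∧ n - quotientDim Q < i) :
    ∃ g ∈ I, g.totalDegree ≤ idealPartialDegree I i ∧ ∀ Q ∈ s, g ∉ Q := by
  have not_le : ∀ Q ∈ s, ¬I.restrictScalars K ⊓
      restrictTotalDegree (Fin n) K (idealPartialDegree I i) ≤ Q.restrictScalars K := by
    intro Q hQ le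
    obtain ⟨prime, Q_le, codim_lt⟩ := h Q hQ
    have truncation : IsTruncationPrime I (idealPartialDegree I i) Q :=
      ⟨prime, Q_le, fun p hp hd ↦ le ⟨hp, (mem_restrictTotalDegree _ _ _).2 hd⟩⟩
    exact codim_lt.not_ge
      ((le_truncationCodim_idealPartialDegree hi).trans truncation.truncationCodim_le)
  obtain ⟨g, ⟨g_mem, hg⟩, g_notMem⟩ := exists_mem_forall_notMem_of_not_le hs not_le
  exact ⟨g, g_mem, (mem_restrictTotalDegree _ _ _).1 hg, g_notMem⟩

lemma exists_mem_forall_lt_codim (hi : i + 1 ≤ n - quotientDim I)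
    (hJ : ∀ Q : Ideal (MvPolynomial (Fin n) K), Q.IsPrime → Q ≤ I → J ≤ Q →
      i ≤ n - quotientDim Q) :
    ∃ g ∈ I, g.totalDegree ≤ idealPartialDegree I (i + 1) ∧
      ∀ Q : Ideal (MvPolynomial (Fin n) K), Q.IsPrime → Q ≤ I → J ≤ Q → g ∈ Q →
        i + 1 ≤ n - quotientDim Q := by
  obtain ⟨g, g_mem, hg, g_notMem⟩ := exists_mem_totalDegree_le_forall_notMem hi
    (s := {Q | Q ∈ J.minimalPrimes ∧ Q ≤ I ∧ n - quotientDim Q < i + 1})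
    ((Ideal.finite_minimalPrimes_of_isNoetherianRing _ J).subset fun Q hQ ↦ hQ.1)
    fun Q hQ ↦ ⟨hQ.1.1.1, hQ.2⟩
  refine ⟨g, g_mem, hg, fun Q hQ Q_le le_Q g_mem_Q ↦ ?_⟩
  obtain ⟨Q₀, hQ₀, Q₀_le⟩ := Ideal.exists_minimalPrimes_le le_Q
  have : Q₀.IsPrime := hQ₀.1.1
  have le_codim := hJ Q₀ hQ₀.1.1 (Q₀_le.trans Q_le) hQ₀.1.2
  obtain rfl | lt := Q₀_le.eq_or_lt
  · by_contra! codim_lt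
    exact g_notMem Q₀ ⟨hQ₀, Q_le, codim_lt⟩ g_mem_Q
  · have := quotientDim_lt lt
    have := quotientDim_le Q₀
    omega

variable (I) in
theorem exists_totalDegree_le_forall_le_codim (hi : i ≤ n - quotientDim I) :
    ∃ f : ℕ → MvPolynomial (Fin n) K,
      (∀ j ∈ Finset.Icc 1 i, f j ∈ I ∧ (f j).totalDegree ≤ idealPartialDegree I j) ∧
      ∀ Q : Ideal (MvPolynomial (Fin n) K), Q.IsPrime → Q ≤ I →
        (∀ j ∈ Finset.Icc 1 i, f j ∈ Q) → i ≤ n - quotientDim Q := by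
  induction i with
  | zero => exact ⟨0, by simp, by simp⟩
  | succ i ih =>
    obtain ⟨f, hf, le_codim⟩ := ih (by omega)
    have span_le_iff (Q : Ideal (MvPolynomial (Fin n) K)) :
        Ideal.span (f '' Finset.Icc 1 i) ≤ Q ↔ ∀ j ∈ Finset.Icc 1 i, f j ∈ Q := by
      rw [Ideal.span_le, image_subset_iff]; rfl
    obtain ⟨g, g_mem, hg, lt_codim⟩ := exists_mem_forall_lt_codim hi
      (J := Ideal.span (f '' Finset.Icc 1 i))
      fun Q hQ Q_le le_Q ↦ le_codim Q hQ Q_le ((span_le_iff Q).1 le_Q)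
    have forall_Icc_succ (p : ℕ → MvPolynomial (Fin n) K → Prop) :
        (∀ j ∈ Finset.Icc 1 (i + 1), p j (Function.update f (i + 1) g j)) ↔
          (∀ j ∈ Finset.Icc 1 i, p j (f j)) ∧ p (i + 1) g := by
      have update_eq : ∀ j ∈ Finset.Icc 1 i, Function.update f (i + 1) g j = f j :=
        fun j hj ↦ Function.update_of_ne (by have := (Finset.mem_Icc.1 hj).2; omega) _ _
      rw [← Finset.insert_Icc_right_eq_Icc_add_one (by omega), Finset.forall_mem_insert,
        Function.update_self, and_comm]
      exact and_congr_left' (forall₂_congr fun j hj ↦ by rw [update_eq j hj])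
    refine ⟨Function.update f (i + 1) g,
      (forall_Icc_succ fun j p ↦ p ∈ I ∧ p.totalDegree ≤ idealPartialDegree I j).2
        ⟨hf, g_mem, hg⟩, fun Q hQ Q_le mem_Q ↦ ?_⟩
    obtain ⟨f_mem_Q, g_mem_Q⟩ := (forall_Icc_succ fun _ p ↦ p ∈ Q).1 mem_Q
    exact lt_codim Q hQ Q_le ((span_le_iff Q).2 f_mem_Q) g_mem_Q

end Selection

section AsymptoticConverseOfBezout

variable {n : ℕ} {V : Set (Fin n → ℂ)}

lemma IsIrredVariety.exists_hilbertFunction_le_of_le_degree (hV : IsIrredVariety n V) :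
    ∃ D ≤ degree n V, ∀ m, hilbertFunction (vanishingIdeal n V) m ≤
      D * monomialCount (quotientDim (vanishingIdeal n V)) m := by
  have := hV.isPrime_vanishingIdeal
  obtain ⟨D, hilbert_le, L, finrank_eq, finite_inter, D_le⟩ :=
    exists_affineSubspace_le_ncard_inter (vanishingIdeal n V)
  obtain ⟨N, ncard_le⟩ := exists_ncard_zeroLocus_inter_affineSubspace_le (vanishingIdeal n V)
  rw [zeroLocus_vanishingIdeal hV.1] at finite_inter D_le ncard_le
  refine ⟨D, D_le.trans (le_csSup ⟨N, ?_⟩ ⟨L, ?_, finite_inter, rfl⟩), hilbert_le⟩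
  · rintro m ⟨L', -, finite_inter', rfl⟩
    exact ncard_le L' finite_inter'
  · rw [dim_eq_quotientDim hV, finrank_eq]

lemma IsIrredVariety.prod_totalDegree_le (hV : IsIrredVariety n V)
    {f : ℕ → MvPolynomial (Fin n) ℂ}
    (hf : ∀ j ∈ Finset.Icc 1 (n - dim n V),
      (f j).totalDegree ≤ idealPartialDegree (vanishingIdeal n V) j) :
    ∏ j ∈ Finset.Icc 1 (n - dim n V), (f j).totalDegree ≤
      n.factorial * (2 ^ n * n.factorial) ^ n * degree n V := by
  have := hV.isPrime_vanishingIdeal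
  obtain ⟨D, D_le, hilbert_le⟩ := hV.exists_hilbertFunction_le_of_le_degree
  refine (Finset.prod_le_prod' hf).trans ?_
  rw [dim_eq_quotientDim hV]
  exact (prod_idealPartialDegree_le_of_hilbertFunction_le _ hilbert_le).trans
    (Nat.mul_le_mul_left _ D_le)

lemma IsIrredVariety.isIrredComponent_zeroLocusUpTo (hV : IsIrredVariety n V)
    {f : ℕ → MvPolynomial (Fin n) ℂ} {r : ℕ}
    (hf : ∀ j ∈ Finset.Icc 1 r, f j ∈ vanishingIdeal n V)
    (le_codim : ∀ Q : Ideal (MvPolynomial (Fin n) ℂ), Q.IsPrime → Q ≤ vanishingIdeal n V →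
      (∀ j ∈ Finset.Icc 1 r, f j ∈ Q) → n - dim n V ≤ n - quotientDim Q) :
    IsIrredComponent n V (zeroLocusUpTo n f r) := by
  have := hV.isPrime_vanishingIdeal
  refine ⟨hV, ?_, fun W hW V_le W_le ↦ ?_⟩
  · rintro x hx _ ⟨j, one_le, j_le, rfl⟩
    exact hf j (Finset.mem_Icc.2 ⟨one_le, j_le⟩) x hx
  have := hW.isPrime_vanishingIdeal
  have codim_le := le_codim _ hW.isPrime_vanishingIdeal (vanishingIdeal_anti V_le)
    fun j hj x hx ↦ W_le hx _ ⟨j, (Finset.mem_Icc.1 hj).1, (Finset.mem_Icc.1 hj).2, rfl⟩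
  have vanishingIdeal_eq : vanishingIdeal n W = vanishingIdeal n V := by
    by_contra ne
    have := quotientDim_lt ((vanishingIdeal_anti V_le).lt_of_ne ne)
    have := quotientDim_le (vanishingIdeal n W)
    rw [dim_eq_quotientDim hV] at codim_le
    omega
  rw [← zeroLocus_vanishingIdeal hW.1, vanishingIdeal_eq, zeroLocus_vanishingIdeal hV.1]

end AsymptoticConverseOfBezout

/-- Theorem 3 of the paper: an asymptotic converse to Bézout's inequality.
Every irreducible variety `V ⊆ ℂⁿ` of dimension `d` is an irreducible component of
`Z(f₁, …, f_{n-d})` for polynomials with `∏ deg f_i ≤ C(n) · deg V`. -/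
theorem statement2 (n : ℕ) :
    ∃ C : ℝ, 0 < C ∧
      ∀ (V : Set (Fin n → ℂ)) (d : ℕ), IsIrredVariety n V → dim n V = d →
        ∃ f : ℕ → MvPolynomial (Fin n) ℂ,
          IsIrredComponent n V (zeroLocusUpTo n f (n - d)) ∧
          (∏ i ∈ Finset.Icc 1 (n - d), ((f i).totalDegree : ℝ)) ≤ C * (degree n V : ℝ) := by
  refine ⟨(n.factorial * (2 ^ n * n.factorial) ^ n : ℕ), by positivity, ?_⟩
  rintro V d hV rfl
  have := hV.isPrime_vanishingIdeal
  obtain ⟨f, hf, le_codim⟩ := exists_totalDegree_le_forall_le_codim (vanishingIdeal n V)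
    (Nat.sub_le_sub_left (dim_eq_quotientDim hV).ge n)
  refine ⟨f, hV.isIrredComponent_zeroLocusUpTo (fun j hj ↦ (hf j hj).1) le_codim, ?_⟩
  exact_mod_cast hV.prod_totalDegree_le fun j hj ↦ (hf j hj).2

end Paper
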